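/- Let M be a stable reduced G_C-perfect R-module of G_C-dimension n, and assume λM ∈ A_C. Then the following are equivalent: (i) M is horizontally linked; (ii) r.grade_R(M,C) + r.grade_R(λM, R) = grade_R(Ext_R^n(M,C)); (iii) grade_R(Ext_R^n(M,C)) ≥ n + 1; (iv) grade_R(Ext_R^i(M,C)) ≥ i + 1 for all i > 0. -/

import Mathlib

open CategoryTheory TensorProduct

noncomputable section

universe u

variable (R : Type u) [CommRing R]

/-- The `i`-th Ext module `Ext_R^i(M, N)`. -/
def ExtM (M N : ModuleCat.{u} R) (i : ℕ) : ModuleCat.{u} R :=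
  ((Ext R (ModuleCat.{u} R) i).obj (Opposite.op M)).obj N

/-- The `i`-th Tor module `Tor_i^R(M, N)`. -/
def TorM (M N : ModuleCat.{u} R) (i : ℕ) : ModuleCat.{u} R :=
  ((Tor (ModuleCat.{u} R) i).obj M).obj N

/-- The biduality (evaluation) map `M → Hom_R(Hom_R(M, C), C)`. -/
def bidualityMap (C M : ModuleCat.{u} R) :
    ↥M →ₗ[R] ((↥M →ₗ[R] ↥C) →ₗ[R] ↥C) :=
  (LinearMap.id : (↥M →ₗ[R] ↥C) →ₗ[R] (↥M →ₗ[R] ↥C)).flip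

/-- `C` is a semidualizing `R`-module. -/
def IsSemidualizing (C : ModuleCat.{u} R) : Prop :=
  Module.Finite R ↥C ∧
  Function.Bijective (fun r : R => (r • LinearMap.id : ↥C →ₗ[R] ↥C)) ∧
  ∀ i : ℕ, 0 < i → Subsingleton (ExtM R C C i)

/-- `M` is totally `C`-reflexive. -/
def IsTotallyCReflexive (C M : ModuleCat.{u} R) : Prop :=
  Module.Finite R ↥M ∧
  Function.Bijective (bidualityMap R C M) ∧
  (∀ i : ℕ, 0 < i → Subsingleton (ExtM R M C i)) ∧
  (∀ i : ℕ, 0 < i → Subsingleton (ExtM R (ModuleCat.of R (↥M →ₗ[R] ↥C)) C i))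

/-- `G_C`-dimension of `M` is at most `n`: there is an exact sequence
`0 → X_n → ⋯ → X_0 → M → 0` with each `X_i` totally `C`-reflexive. -/
def gcdimLE (C : ModuleCat.{u} R) : ℕ → ModuleCat.{u} R → Prop
  | 0, M => IsTotallyCReflexive R C M
  | n+1, M => ∃ (X K : ModuleCat.{u} R) (f : ↥K →ₗ[R] ↥X) (g : ↥X →ₗ[R] ↥M),
      Function.Injective f ∧ Function.Surjective g ∧
      LinearMap.ker g = LinearMap.range f ∧
      IsTotallyCReflexive R C X ∧ gcdimLE C n K

/-- The `G_C`-dimension of `M`, as an element of `ℕ∞`. -/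
def gcdim (C M : ModuleCat.{u} R) : ℕ∞ :=
  sInf ((fun n : ℕ => (n : ℕ∞)) '' {n | gcdimLE R C n M})

/-- `grade_R(M) = inf { i | Ext_R^i(M, R) ≠ 0 }`, with `grade 0 = ∞`. -/
def gradeR (M : ModuleCat.{u} R) : ℕ∞ :=
  sInf ((fun i : ℕ => (i : ℕ∞)) ''
    {i | ¬ Subsingleton (ExtM R M (ModuleCat.of R R) i)})

/-- Reduced grade of `M` with respect to `C`. -/
def rgrade (C M : ModuleCat.{u} R) : ℕ∞ :=
  sInf ((fun i : ℕ => (i : ℕ∞)) ''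
    {i | 0 < i ∧ ¬ Subsingleton (ExtM R M C i)})

/-- `M` is reduced `G_C`-perfect. -/
def IsReducedGCPerfect (C M : ModuleCat.{u} R) : Prop :=
  gcdim R C M ≠ ⊤ ∧ rgrade R C M = gcdim R C M

/-- `M` is `G_C`-perfect. -/
def IsGCPerfect (C M : ModuleCat.{u} R) : Prop :=
  gcdim R C M ≠ ⊤ ∧ gradeR R M = gcdim R C M

/-- `π : P → M` is a projective cover: `P` projective, `π` surjective with superfluous kernel. -/
def IsProjectiveCover {P M : ModuleCat.{u} R} (π : ↥P →ₗ[R] ↥M) : Prop :=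
  Module.Projective R ↥P ∧ Function.Surjective π ∧
  ∀ N : Submodule R ↥P, N ⊔ LinearMap.ker π = ⊤ → N = ⊤

/-- `P₁ →d P₀ →π M → 0` is a minimal projective presentation of `M`. -/
def IsMinimalPresentation {P1 P0 M : ModuleCat.{u} R}
    (d : ↥P1 →ₗ[R] ↥P0) (π : ↥P0 →ₗ[R] ↥M) : Prop :=
  Module.Finite R ↥P1 ∧ Module.Finite R ↥P0 ∧
  IsProjectiveCover R π ∧
  LinearMap.range d = LinearMap.ker π ∧
  Module.Projective R ↥P1 ∧
  ∀ N : Submodule R ↥P1, N ⊔ LinearMap.ker d = ⊤ → N = ⊤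

/-- `T` is (a module isomorphic to) the transpose `Tr_C(M)` of `M` with respect to `C`,
computed from a minimal projective presentation of `M`. -/
def IsTransposeC (C M T : ModuleCat.{u} R) : Prop :=
  ∃ (P1 P0 : ModuleCat.{u} R) (d : ↥P1 →ₗ[R] ↥P0) (π : ↥P0 →ₗ[R] ↥M),
    IsMinimalPresentation R d π ∧
    Nonempty (↥T ≃ₗ[R]
      ((↥P1 →ₗ[R] ↥C) ⧸ LinearMap.range (LinearMap.lcomp R ↥C d)))

/-- `T` is the usual Auslander transpose `Tr(M) = Tr_R(M)`. -/
def IsTranspose (M T : ModuleCat.{u} R) : Prop :=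
  IsTransposeC R (ModuleCat.of R R) M T

/-- `S` is (a module isomorphic to) the first syzygy `Ω N`, i.e. the kernel of a
projective cover of `N`. -/
def IsSyzygyOf (N S : ModuleCat.{u} R) : Prop :=
  ∃ (P : ModuleCat.{u} R) (π : ↥P →ₗ[R] ↥N),
    Module.Finite R ↥P ∧ IsProjectiveCover R π ∧
    Nonempty (↥S ≃ₗ[R] LinearMap.ker π)

/-- `S` is (a module isomorphic to) the `n`-th syzygy `Ωⁿ M`. -/
def IsNthSyzygy : ℕ → ModuleCat.{u} R → ModuleCat.{u} R → Prop
  | 0, M, S => Nonempty (↥S ≃ₗ[R] ↥M)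
  | n+1, M, S => ∃ K : ModuleCat.{u} R, IsNthSyzygy n M K ∧ IsSyzygyOf R K S

/-- `L` is (a module isomorphic to) `λ M = Ω Tr M`. -/
def IsLambda (M L : ModuleCat.{u} R) : Prop :=
  ∃ T : ModuleCat.{u} R, IsTranspose R M T ∧ IsSyzygyOf R T L

/-- `M` is horizontally linked, i.e. `M ≅ λλM`. -/
def IsHorizontallyLinked (M : ModuleCat.{u} R) : Prop :=
  ∃ L L2 : ModuleCat.{u} R, IsLambda R M L ∧ IsLambda R L L2 ∧
    Nonempty (↥M ≃ₗ[R] ↥L2)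

/-- `M` is stable: it has no non-zero projective direct summand. -/
def IsStable (M : ModuleCat.{u} R) : Prop :=
  ∀ (P N : ModuleCat.{u} R), Module.Projective R ↥P →
    Nonempty (↥M ≃ₗ[R] (↥P × ↥N)) → Subsingleton ↥P

/-- `N` belongs to the Auslander class `A_C`. -/
def MemAuslanderClass (C N : ModuleCat.{u} R) : Prop :=
  Function.Bijective (TensorProduct.mk R ↥N ↥C) ∧
  (∀ i : ℕ, 0 < i → Subsingleton (TorM R C N i)) ∧
  (∀ i : ℕ, 0 < i → Subsingleton
    (ExtM R C (ModuleCat.of R (↥N ⊗[R] ↥C)) i))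

/-- `R` is semiperfect: every finite `R`-module has a projective cover. -/
def IsSemiperfectRing : Prop :=
  ∀ M : ModuleCat.{u} R, Module.Finite R ↥M →
    ∃ (P : ModuleCat.{u} R) (π : ↥P →ₗ[R] ↥M),
      Module.Finite R ↥P ∧ IsProjectiveCover R π

/-- Depth over a local ring, via Ext from the residue field. -/
def rdepth [IsLocalRing R] (M : ModuleCat.{u} R) : ℕ∞ :=
  sInf ((fun i : ℕ => (i : ℕ∞)) ''
    {i | ¬ Subsingleton
      (ExtM R (ModuleCat.of R (IsLocalRing.ResidueField R)) M i)})

/-- Projective dimension at most `n`. -/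
def pdimLE : ℕ → ModuleCat.{u} R → Prop
  | 0, M => Module.Projective R ↥M
  | n+1, M => ∃ (X K : ModuleCat.{u} R) (f : ↥K →ₗ[R] ↥X) (g : ↥X →ₗ[R] ↥M),
      Function.Injective f ∧ Function.Surjective g ∧
      LinearMap.ker g = LinearMap.range f ∧
      Module.Projective R ↥X ∧ pdimLE n K

/-- Projective dimension, as an element of `ℕ∞`. -/
def pdim (M : ModuleCat.{u} R) : ℕ∞ :=
  sInf ((fun n : ℕ => (n : ℕ∞)) '' {n | pdimLE R n M})

/-- `M` is `C`-`k`-torsionless. -/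
def IsCkTorsionless (C M : ModuleCat.{u} R) (k : ℕ) : Prop :=
  k = 0 ∨ ∀ T : ModuleCat.{u} R, IsTransposeC R C M T →
    ∀ i : ℕ, 1 ≤ i → i ≤ k → Subsingleton (ExtM R T C i)

/-- `M` is a `C`-syzygy: it embeds into `P ⊗_R C` with `P` finite projective. -/
def IsCSyzygy (C M : ModuleCat.{u} R) : Prop :=
  ∃ (P : ModuleCat.{u} R), Module.Finite R ↥P ∧ Module.Projective R ↥P ∧
    ∃ f : ↥M →ₗ[R] (↥P ⊗[R] ↥C), Function.Injective f


/-- There is an exact sequence `0 → N → X_k → ⋯ → X_1 → M → 0` of finite `R`-modules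
with `Ext_R^i(X_j, C) = 0` for all `i > 0` and all `j`. -/
def ExtVanishingChain (C : ModuleCat.{u} R) : ℕ → ModuleCat.{u} R → ModuleCat.{u} R → Prop
  | 0, N, M => Nonempty (↥N ≃ₗ[R] ↥M)
  | k+1, N, M => ∃ (X K : ModuleCat.{u} R) (f : ↥K →ₗ[R] ↥X) (g : ↥X →ₗ[R] ↥M),
      Function.Injective f ∧ Function.Surjective g ∧
      LinearMap.ker g = LinearMap.range f ∧
      Module.Finite R ↥X ∧ (∀ i : ℕ, 0 < i → Subsingleton (ExtM R X C i)) ∧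
      ExtVanishingChain C k N K


section Found
variable {R}

lemma homologyEquivOf (S : ShortComplex (ModuleCat.{u} R)) (Y : Type u) [AddCommGroup Y] [Module R Y]
    (Φ : LinearMap.ker S.g.hom →ₗ[R] Y) (hs : Function.Surjective Φ)
    (hk : LinearMap.ker Φ = LinearMap.range S.moduleCatToCycles) :
    Nonempty (S.homology ≃ₗ[R] Y) := by
  refine ⟨S.moduleCatHomologyIso.toLinearEquiv ≪≫ₗ ?_⟩
  exact (Submodule.quotEquivOfEq _ _ hk.symm) ≪≫ₗ (Φ.quotKerEquivOfSurjective hs)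

lemma extMk_zero_inj {M N : ModuleCat.{u} R} (P : ProjectiveResolution M)
    (f : P.complex.X 0 ⟶ N) (hf : P.complex.d 1 0 ≫ f = 0) (h : P.extMk f 1 rfl hf = 0) : f = 0 := by
  rw [← P.extEquivCohomologyClass.apply_eq_iff_eq,
    ProjectiveResolution.extEquivCohomologyClass_extMk,
    ProjectiveResolution.extEquivCohomologyClass_zero,
    CochainComplex.HomComplex.CohomologyClass.mk_eq_zero_iff,
    CochainComplex.HomComplex.Cocycle.toSingleMk_mem_coboundaries_iff _ _ _ _ _ 1 (by simp)] at h
  obtain ⟨g, hg⟩ := h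
  have hz : Limits.IsZero (P.cochainComplex.X 1) := by
    exact CochainComplex.isZero_of_isStrictlyLE _ 0 1 (by simp)
  rw [hz.eq_of_src g 0, Limits.comp_zero] at hg
  rw [← cancel_epi (P.cochainComplexXIso (-(0:ℕ)) 0 rfl).hom, ← hg]
  simp

lemma ext_smul_extMk {M N : ModuleCat.{u} R} (P : ProjectiveResolution M) {n : ℕ} (r : R)
    (f : P.complex.X n ⟶ N) (hf : P.complex.d (n+1) n ≫ f = 0) :
    P.extMk (r • f) (n+1) rfl (by simp [hf]) = r • P.extMk f (n+1) rfl hf := by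
  rw [Abelian.Ext.smul_eq_comp_mk₀, ProjectiveResolution.extMk_comp_mk₀]
  congr 1

/-- The comparison map from cocycles. -/
def extPhi {M N : ModuleCat.{u} R} (P : ProjectiveResolution M) (n : ℕ) :
    LinearMap.ker ((P.complex.linearYonedaObj R N).d n (n+1)).hom →ₗ[R] Abelian.Ext M N n where
  toFun f := P.extMk (n := n) f.1 (n+1) rfl f.2
  map_add' _ _ := (P.add_extMk _ _ _ _ _ _).symm
  map_smul' r _ := ext_smul_extMk P r _ _

theorem extM_equiv (M N : ModuleCat.{u} R) (n : ℕ) :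
    Nonempty (ExtM R M N n ≃ₗ[R] Abelian.Ext M N n) := by
  let P := projectiveResolution M
  have e1 := (P.isoExt (R := R) n N).toLinearEquiv
  cases n with
  | zero =>
    have e2 := ((P.complex.linearYonedaObj R N).homologyIsoSc' 0 0 1 (by simp) (by simp)).toLinearEquiv
    obtain ⟨e3⟩ := homologyEquivOf ((P.complex.linearYonedaObj R N).sc' 0 0 1) (Abelian.Ext M N 0)
      (extPhi P 0) (fun α => by
        obtain ⟨f, hf, rfl⟩ := P.extMk_surjective α 1 rfl
        exact ⟨⟨f, hf⟩, rfl⟩) (by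
        ext ⟨f, hf⟩
        constructor
        · intro h
          have : f = 0 := extMk_zero_inj P f hf h
          subst this
          exact ⟨0, by ext; simp⟩
        · rintro ⟨x, hx⟩
          have : f = 0 := by
            have := congrArg Subtype.val hx
            refine this.symm.trans ?_
            change ((P.complex.linearYonedaObj R N).d 0 0).hom x = 0
            rw [HomologicalComplex.shape _ _ _ (by simp)]
            rfl
          subst this
          exact P.extMk_zero 1 rfl)
    exact ⟨e1 ≪≫ₗ e2 ≪≫ₗ e3⟩
  | succ k =>
    have e2 := ((P.complex.linearYonedaObj R N).homologyIsoSc' k (k+1) (k+1+1) (by simp) (by simp)).toLinearEquiv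
    obtain ⟨e3⟩ := homologyEquivOf ((P.complex.linearYonedaObj R N).sc' k (k+1) (k+1+1)) (Abelian.Ext M N (k+1))
      (extPhi P (k+1)) (fun α => by
        obtain ⟨f, hf, rfl⟩ := P.extMk_surjective α (k+1+1) rfl
        exact ⟨⟨f, hf⟩, rfl⟩) (by
        ext ⟨f, hf⟩
        constructor
        · intro h
          obtain ⟨g, hg⟩ := (P.extMk_eq_zero_iff f (k+1+1) rfl hf k rfl).1 h
          exact ⟨g, Subtype.ext hg⟩
        · rintro ⟨x, hx⟩
          exact (P.extMk_eq_zero_iff f (k+1+1) rfl hf k rfl).2 ⟨x, congrArg Subtype.val hx⟩)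
    exact ⟨e1 ≪≫ₗ e2 ≪≫ₗ e3⟩

end Found

section LES
variable {R}

/-- Vanishing of Ext. -/
abbrev XV (M N : ModuleCat.{u} R) (i : ℕ) : Prop := Subsingleton (Abelian.Ext M N i)

lemma extM_iff (M N : ModuleCat.{u} R) (i : ℕ) : Subsingleton (ExtM R M N i) ↔ XV M N i := by
  obtain ⟨e⟩ := extM_equiv M N i
  exact e.toEquiv.subsingleton_congr

/-- Short exact sequence of linear maps. -/
def SE {A B D : ModuleCat.{u} R} (f : A →ₗ[R] B) (g : B →ₗ[R] D) : Prop :=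
  Function.Injective f ∧ Function.Surjective g ∧ LinearMap.ker g = LinearMap.range f

lemma SE.comp {A B D : ModuleCat.{u} R} {f : A →ₗ[R] B} {g : B →ₗ[R] D} (h : SE f g) :
    g ∘ₗ f = 0 := by
  ext x
  have : f x ∈ LinearMap.ker g := by rw [h.2.2]; exact ⟨x, rfl⟩
  exact this

/-- The short complex. -/
abbrev SE.sc {A B D : ModuleCat.{u} R} {f : A →ₗ[R] B} {g : B →ₗ[R] D} (h : SE f g) :
    ShortComplex (ModuleCat.{u} R) :=
  ShortComplex.mk (ModuleCat.ofHom f) (ModuleCat.ofHom g) (by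
    rw [← ModuleCat.ofHom_comp, h.comp]; rfl)

lemma SE.se {A B D : ModuleCat.{u} R} {f : A →ₗ[R] B} {g : B →ₗ[R] D} (h : SE f g) :
    h.sc.ShortExact where
  exact := by
    rw [ShortComplex.moduleCat_exact_iff_range_eq_ker]
    exact h.2.2.symm
  mono_f := (ModuleCat.mono_iff_injective _).mpr h.1
  epi_g := (ModuleCat.epi_iff_surjective _).mpr h.2.1

lemma xv_zero_iff (M N : ModuleCat.{u} R) : XV M N 0 ↔ Subsingleton (M →ₗ[R] N) := by
  refine (Abelian.Ext.addEquiv₀ (X := M) (Y := N)).toEquiv.subsingleton_congr.trans ?_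
  exact (ModuleCat.homEquiv).subsingleton_congr

lemma xv_proj (P N : ModuleCat.{u} R) (hP : Module.Projective R P) (i : ℕ) (hi : 0 < i) : XV P N i := by
  obtain ⟨i, rfl⟩ := Nat.exists_eq_succ_of_ne_zero hi.ne'
  have : Projective P := (IsProjective.iff_projective P).1 hP
  exact subsingleton_of_forall_eq 0 (fun y => Abelian.Ext.eq_zero_of_projective y)

variable {A B D : ModuleCat.{u} R} {f : A →ₗ[R] B} {g : B →ₗ[R] D}

lemma SE.shift (h : SE f g) (N : ModuleCat.{u} R) (i : ℕ) (h1 : XV B N i) (h2 : XV B N (i+1)) :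
    Nonempty (Abelian.Ext A N i ≃ₗ[R] Abelian.Ext D N (i+1)) := by
  refine ⟨LinearEquiv.ofBijective (h.se.extClass.precompOfLinear R N (add_comm 1 i)) ⟨?_, ?_⟩⟩
  · rw [← LinearMap.ker_eq_bot, LinearMap.ker_eq_bot']
    intro x hx
    obtain ⟨y, hy⟩ := Abelian.Ext.contravariant_sequence_exact₁ h.se N x (add_comm 1 i) hx
    rw [← hy, Subsingleton.elim y 0]
    simp
  · intro x
    obtain ⟨y, hy⟩ := Abelian.Ext.contravariant_sequence_exact₃ h.se N x (Subsingleton.elim _ _) (add_comm 1 i)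
    exact ⟨y, hy⟩

lemma SE.shift_iff (h : SE f g) (N : ModuleCat.{u} R) (i : ℕ) (h1 : XV B N i) (h2 : XV B N (i+1)) :
    XV A N i ↔ XV D N (i+1) := by
  obtain ⟨e⟩ := h.shift N i h1 h2
  exact e.toEquiv.subsingleton_congr

lemma SE.one (h : SE f g) (N : ModuleCat.{u} R) (h2 : XV B N 1) :
    Nonempty (((A →ₗ[R] N) ⧸ LinearMap.range (LinearMap.lcomp R N f)) ≃ₗ[R] Abelian.Ext D N 1) := by
  let Φ : (A →ₗ[R] N) →ₗ[R] Abelian.Ext D N 1 :=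
    (h.se.extClass.precompOfLinear R N (add_comm 1 0)) ∘ₗ
     (Abelian.Ext.linearEquiv₀ (R := R) (X := A) (Y := N)).symm.toLinearMap ∘ₗ
     (ModuleCat.homLinearEquiv (S := R) (M := A) (N := N)).symm.toLinearMap
  have hs : Function.Surjective Φ := by
    intro x
    obtain ⟨y, hy⟩ := Abelian.Ext.contravariant_sequence_exact₃ h.se N x (Subsingleton.elim _ _) (add_comm 1 0)
    obtain ⟨z, rfl⟩ := ((ModuleCat.homLinearEquiv (S := R) (M := A) (N := N)).symm ≪≫ₗ (Abelian.Ext.linearEquiv₀ (R := R) (X := A) (Y := N)).symm).surjective y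
    exact ⟨z, hy⟩
  refine ⟨Submodule.quotEquivOfEq _ _ ?_ ≪≫ₗ Φ.quotKerEquivOfSurjective hs⟩
  ext φ
  constructor
  · rintro ⟨ψ, rfl⟩
    have : Φ (ψ ∘ₗ f) = h.se.extClass.comp (Abelian.Ext.mk₀ (ModuleCat.ofHom f ≫ ModuleCat.ofHom ψ)) (add_comm 1 0) := rfl
    refine this.trans ?_
    rw [← Abelian.Ext.mk₀_comp_mk₀, ← Abelian.Ext.comp_assoc _ _ _ (add_zero 1) _ (by simp)]
    have := h.se.extClass_comp
    dsimp at this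
    rw [this, Abelian.Ext.zero_comp]
  · intro hφ
    obtain ⟨y, hy⟩ := Abelian.Ext.contravariant_sequence_exact₁ h.se N _ (add_comm 1 0) hφ
    obtain ⟨z, rfl⟩ := ((ModuleCat.homLinearEquiv (S := R) (M := B) (N := N)).symm ≪≫ₗ (Abelian.Ext.linearEquiv₀ (R := R) (X := B) (Y := N)).symm).surjective y
    refine ⟨z, ?_⟩
    have h3 : (Abelian.Ext.mk₀ (ModuleCat.ofHom f)).comp (Abelian.Ext.mk₀ (ModuleCat.ofHom z)) (zero_add 0) = Abelian.Ext.mk₀ (ModuleCat.ofHom φ) := hy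
    rw [Abelian.Ext.mk₀_comp_mk₀] at h3
    have h4 := Abelian.Ext.homEquiv₀.symm.injective h3
    exact congrArg ModuleCat.Hom.hom h4

lemma SE.one_iff (h : SE f g) (N : ModuleCat.{u} R) (h2 : XV B N 1) :
    XV D N 1 ↔ ∀ φ : A →ₗ[R] N, ∃ ψ : B →ₗ[R] N, ψ ∘ₗ f = φ := by
  obtain ⟨e⟩ := h.one N h2
  refine e.toEquiv.subsingleton_congr.symm.trans ?_
  rw [Submodule.Quotient.subsingleton_iff, LinearMap.range_eq_top]
  rfl

lemma SE.extend (h : SE f g) (N : ModuleCat.{u} R) (h2 : XV D N 1) (φ : A →ₗ[R] N) : ∃ ψ : B →ₗ[R] N, ψ ∘ₗ f = φ := by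
  obtain ⟨y, hy⟩ := Abelian.Ext.contravariant_sequence_exact₁ h.se N (Abelian.Ext.mk₀ (ModuleCat.ofHom φ)) (add_comm 1 0) (Subsingleton.elim _ _)
  obtain ⟨z, rfl⟩ := ((ModuleCat.homLinearEquiv (S := R) (M := B) (N := N)).symm ≪≫ₗ (Abelian.Ext.linearEquiv₀ (R := R) (X := B) (Y := N)).symm).surjective y
  refine ⟨z, ?_⟩
  have h3 : (Abelian.Ext.mk₀ (ModuleCat.ofHom f)).comp (Abelian.Ext.mk₀ (ModuleCat.ofHom z)) (zero_add 0) = Abelian.Ext.mk₀ (ModuleCat.ofHom φ) := hy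
  rw [Abelian.Ext.mk₀_comp_mk₀] at h3
  have h4 := Abelian.Ext.homEquiv₀.symm.injective h3
  exact congrArg ModuleCat.Hom.hom h4

/-- covariant lifting. -/
lemma SE.lift (h : SE f g) (N : ModuleCat.{u} R) (h2 : XV N A 1) (φ : N →ₗ[R] D) : ∃ ψ : N →ₗ[R] B, g ∘ₗ ψ = φ := by
  obtain ⟨y, hy⟩ := Abelian.Ext.covariant_sequence_exact₃ N h.se (Abelian.Ext.mk₀ (ModuleCat.ofHom φ)) (zero_add 1) (Subsingleton.elim _ _)
  obtain ⟨z, rfl⟩ := ((ModuleCat.homLinearEquiv (S := R) (M := N) (N := B)).symm ≪≫ₗ (Abelian.Ext.linearEquiv₀ (R := R) (X := N) (Y := B)).symm).surjective y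
  refine ⟨z, ?_⟩
  have h3 : (Abelian.Ext.mk₀ (ModuleCat.ofHom z)).comp (Abelian.Ext.mk₀ (ModuleCat.ofHom g)) (zero_add 0) = Abelian.Ext.mk₀ (ModuleCat.ofHom φ) := hy
  rw [Abelian.Ext.mk₀_comp_mk₀] at h3
  have h4 := Abelian.Ext.homEquiv₀.symm.injective h3
  exact congrArg ModuleCat.Hom.hom h4

lemma SE.cov (h : SE f g) (N : ModuleCat.{u} R) (i : ℕ) (h1 : XV N B i) (h2 : XV N A (i+1)) : XV N D i := by
  refine subsingleton_of_forall_eq 0 fun x => ?_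
  obtain ⟨y, hy⟩ := Abelian.Ext.covariant_sequence_exact₃ N h.se x rfl (Subsingleton.elim _ _)
  rw [← hy, Subsingleton.elim y 0]
  simp

lemma xv_congr {M M' : ModuleCat.{u} R} (N : ModuleCat.{u} R) (e : M ≃ₗ[R] M') (i : ℕ) : XV M N i ↔ XV M' N i := by
  have key : ∀ {M M' : ModuleCat.{u} R} (e : M ≃ₗ[R] M'), XV M N i → XV M' N i := by
    intro M M' e hM
    refine subsingleton_of_forall_eq 0 fun x => ?_
    have : x = (Abelian.Ext.mk₀ (ModuleCat.ofHom e.symm.toLinearMap)).comp ((Abelian.Ext.mk₀ (ModuleCat.ofHom e.toLinearMap)).comp x (zero_add i)) (zero_add i) := by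
      rw [← Abelian.Ext.comp_assoc _ _ _ (zero_add 0) _ (by simp), Abelian.Ext.mk₀_comp_mk₀, ← ModuleCat.ofHom_comp]
      simp
    rw [this, Subsingleton.elim ((Abelian.Ext.mk₀ (ModuleCat.ofHom e.toLinearMap)).comp x (zero_add i)) 0]
    simp
  exact ⟨key e, key e.symm⟩

/-- A free cover. -/
lemma exists_free_cover (A : ModuleCat.{u} R) : ∃ (A' Q : ModuleCat.{u} R) (f : A' →ₗ[R] Q) (g : Q →ₗ[R] A),
    SE f g ∧ Module.Projective R Q := by
  let g : (A →₀ R) →ₗ[R] A := Finsupp.linearCombination R id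
  refine ⟨ModuleCat.of R (LinearMap.ker g), ModuleCat.of R (A →₀ R), (LinearMap.ker g).subtype, g, ⟨Subtype.val_injective, fun a => ⟨Finsupp.single a 1, by simp [g]⟩, by simp⟩, ?_⟩
  change Module.Projective R (A →₀ R)
  infer_instance

lemma exists_fin_cover [IsNoetherianRing R] (A : ModuleCat.{u} R) (hA : Module.Finite R A) : ∃ (A' Q : ModuleCat.{u} R) (f : A' →ₗ[R] Q) (g : Q →ₗ[R] A),
    SE f g ∧ Module.Projective R Q ∧ Module.Finite R Q ∧ Module.Finite R A' := by
  obtain ⟨n, g, hg⟩ := Module.Finite.exists_fin' R A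
  refine ⟨ModuleCat.of R (LinearMap.ker g), ModuleCat.of R (Fin n → R), (LinearMap.ker g).subtype, g, ⟨Subtype.val_injective, hg, by simp⟩, ?_, ?_, ?_⟩
  · change Module.Projective R (Fin n → R)
    infer_instance
  · change Module.Finite R (Fin n → R)
    infer_instance
  · change Module.Finite R (LinearMap.ker g)
    infer_instance

end LES

section TorPart
variable {R}

lemma SE.rTensor {A B D : ModuleCat.{u} R} {f : A →ₗ[R] B} {g : B →ₗ[R] D} (h : SE f g)
    (P : ModuleCat.{u} R) (hP : Module.Projective R P) :
    SE (A := ModuleCat.of R (A ⊗[R] P)) (B := ModuleCat.of R (B ⊗[R] P)) (D := ModuleCat.of R (D ⊗[R] P))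
      (f.rTensor P) (g.rTensor P) := by
  refine ⟨Module.Flat.rTensor_preserves_injective_linearMap f h.1, LinearMap.rTensor_surjective P h.2.1, ?_⟩
  rw [← LinearMap.exact_iff]
  exact rTensor_exact P (LinearMap.exact_iff.2 h.2.2) h.2.1

lemma xv_tensor_proj (C P : ModuleCat.{u} R) (hP : Module.Projective R P) (i : ℕ) :
    ∀ (A : ModuleCat.{u} R), XV A C (i+1) → XV (ModuleCat.of R (A ⊗[R] P)) C (i+1) := by
  induction i with
  | zero =>
    intro A hA
    obtain ⟨A', Q, f, g, h, hQ⟩ := exists_free_cover A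
    have hQP : Module.Projective R (ModuleCat.of R (Q ⊗[R] P)) := by
      change Module.Projective R (Q ⊗[R] P)
      infer_instance
    rw [(h.rTensor P hP).one_iff C (xv_proj _ _ hQP 1 (by simp))]
    intro φ
    have hsurj : Function.Surjective (LinearMap.lcomp R C f) := fun ψ => h.extend C hA ψ
    obtain ⟨χ, hχ⟩ := Module.projective_lifting_property (LinearMap.lcomp R C f)
      (TensorProduct.curry (φ : A' ⊗[R] P →ₗ[R] C)).flip hsurj
    refine ⟨TensorProduct.lift χ.flip, ?_⟩
    refine TensorProduct.ext' fun a p => ?_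
    have := LinearMap.congr_fun (LinearMap.congr_fun hχ p) a
    exact this
  | succ i ih =>
    intro A hA
    obtain ⟨A', Q, f, g, h, hQ⟩ := exists_free_cover A
    have hQP : Module.Projective R (ModuleCat.of R (Q ⊗[R] P)) := by
      change Module.Projective R (Q ⊗[R] P)
      infer_instance
    rw [← (h.rTensor P hP).shift_iff C (i+1) (xv_proj _ _ hQP _ (by simp)) (xv_proj _ _ hQP _ (by simp))]
    apply ih
    rwa [h.shift_iff C (i+1) (xv_proj _ _ hQ _ (by simp)) (xv_proj _ _ hQ _ (by simp))]

lemma xv_hom_proj (C P : ModuleCat.{u} R) (hP : Module.Projective R P) (i : ℕ) :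
    ∀ (A : ModuleCat.{u} R), XV A C (i+1) → XV A (ModuleCat.of R (P →ₗ[R] C)) (i+1) := by
  induction i with
  | zero =>
    intro A hA
    obtain ⟨A', Q, f, g, h, hQ⟩ := exists_free_cover A
    rw [h.one_iff _ (xv_proj _ _ hQ 1 (by simp))]
    intro φ
    have hsurj : Function.Surjective (LinearMap.lcomp R C f) := fun ψ => h.extend C hA ψ
    obtain ⟨χ, hχ⟩ := Module.projective_lifting_property (LinearMap.lcomp R C f)
      (LinearMap.flip (φ : A' →ₗ[R] P →ₗ[R] C)) hsurj
    refine ⟨χ.flip, ?_⟩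
    refine LinearMap.ext fun a => LinearMap.ext fun p => ?_
    have := LinearMap.congr_fun (LinearMap.congr_fun hχ p) a
    exact this
  | succ i ih =>
    intro A hA
    obtain ⟨A', Q, f, g, h, hQ⟩ := exists_free_cover A
    rw [← h.shift_iff _ (i+1) (xv_proj _ _ hQ _ (by simp)) (xv_proj _ _ hQ _ (by simp))]
    apply ih
    rwa [h.shift_iff C (i+1) (xv_proj _ _ hQ _ (by simp)) (xv_proj _ _ hQ _ (by simp))]

lemma IsSemidualizing.xv {C : ModuleCat.{u} R} (hC : IsSemidualizing R C) (i : ℕ) : XV C C (i+1) :=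
  (extM_iff _ _ _).1 (hC.2.2 _ (by simp))

lemma IsSemidualizing.faithful {C : ModuleCat.{u} R} (hC : IsSemidualizing R C) {r s : R}
    (h : ∀ c : C, r • c = s • c) : r = s :=
  hC.2.1.1 (LinearMap.ext h)

/-- The homothety as a linear equivalence. -/
def IsSemidualizing.eqv {C : ModuleCat.{u} R} (hC : IsSemidualizing R C) : R ≃ₗ[R] (C →ₗ[R] C) :=
  LinearEquiv.ofBijective (LinearMap.toSpanSingleton R _ LinearMap.id) hC.2.1

lemma IsSemidualizing.eqv_symm {C : ModuleCat.{u} R} (hC : IsSemidualizing R C) (φ : C →ₗ[R] C) (c : C) :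
    hC.eqv.symm φ • c = φ c := by
  obtain ⟨r, rfl⟩ := hC.eqv.surjective φ
  rw [LinearEquiv.symm_apply_apply]
  rfl

lemma IsSemidualizing.hom_repr {C : ModuleCat.{u} R} (hC : IsSemidualizing R C)
    {S : Type u} [AddCommGroup S] [Module R S] (ψ : S →ₗ[R] C →ₗ[R] C) :
    ∃ φ : S →ₗ[R] R, ∀ s c, ψ s c = φ s • c :=
  ⟨hC.eqv.symm.toLinearMap ∘ₗ ψ, fun _ _ => (hC.eqv_symm _ _).symm⟩

/-- tensor functional from a functional -/
def tenFun (C : ModuleCat.{u} R) {S : Type u} [AddCommGroup S] [Module R S] (φ : S →ₗ[R] R) : C ⊗[R] S →ₗ[R] C :=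
  TensorProduct.lift ((LinearMap.lsmul R C) ∘ₗ φ).flip

lemma tenFun_tmul (C : ModuleCat.{u} R) {S : Type u} [AddCommGroup S] [Module R S] (φ : S →ₗ[R] R) (c : C) (s : S) :
    tenFun C φ (c ⊗ₜ s) = φ s • c := rfl

lemma tor_shift_one {C : ModuleCat.{u} R} (hC : IsSemidualizing R C)
    {A B D : ModuleCat.{u} R} {f : A →ₗ[R] B} {g : B →ₗ[R] D} (h : SE f g) (hB : Module.Projective R B)
    (hT : SE (A := ModuleCat.of R (C ⊗[R] A)) (B := ModuleCat.of R (C ⊗[R] B)) (D := ModuleCat.of R (C ⊗[R] D))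
      (f.lTensor C) (g.lTensor C)) :
    XV (ModuleCat.of R (C ⊗[R] D)) C 1 ↔ XV D (ModuleCat.of R R) 1 := by
  rw [hT.one_iff C (xv_tensor_proj C B hB 0 C (hC.xv 0)), h.one_iff _ (xv_proj _ _ hB 1 (by simp))]
  constructor
  · intro H φ
    obtain ⟨ψ, hψ⟩ := H (tenFun C φ)
    obtain ⟨χ, hχ⟩ := hC.hom_repr (TensorProduct.curry (ψ : C ⊗[R] B →ₗ[R] C)).flip
    refine ⟨χ, LinearMap.ext fun a => hC.faithful fun c => ?_⟩
    have h1 : ψ (c ⊗ₜ f a) = φ a • c := LinearMap.congr_fun hψ (c ⊗ₜ a)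
    have h2 : ψ (c ⊗ₜ f a) = χ (f a) • c := hχ (f a) c
    exact h2.symm.trans h1
  · intro H ψ
    obtain ⟨φ, hφ⟩ := hC.hom_repr (TensorProduct.curry (ψ : C ⊗[R] A →ₗ[R] C)).flip
    obtain ⟨χ, hχ⟩ := H φ
    refine ⟨tenFun C χ, TensorProduct.ext' fun c a => ?_⟩
    have h1 : ψ (c ⊗ₜ a) = φ a • c := hφ a c
    rw [h1, ← hχ]
    rfl

lemma tor_iff {C : ModuleCat.{u} R} (hC : IsSemidualizing R C) (S F : ℕ → ModuleCat.{u} R)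
    (f : ∀ k, S (k+1) →ₗ[R] F k) (g : ∀ k, F k →ₗ[R] S k) (h : ∀ k, SE (f k) (g k))
    (hF : ∀ k, Module.Projective R (F k)) (hinj : ∀ k, Function.Injective ((f k).lTensor C)) (i : ℕ) :
    ∀ k, XV (ModuleCat.of R (C ⊗[R] S k)) C (i+1) ↔ XV (S k) (ModuleCat.of R R) (i+1) := by
  have hT : ∀ k, SE (A := ModuleCat.of R (C ⊗[R] S (k+1))) (B := ModuleCat.of R (C ⊗[R] F k)) (D := ModuleCat.of R (C ⊗[R] S k))
      ((f k).lTensor C) ((g k).lTensor C) := by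
    intro k
    refine ⟨hinj k, LinearMap.lTensor_surjective C (h k).2.1, ?_⟩
    rw [← LinearMap.exact_iff]
    exact lTensor_exact C (LinearMap.exact_iff.2 (h k).2.2) (h k).2.1
  induction i with
  | zero => exact fun k => tor_shift_one hC (h k) (hF k) (hT k)
  | succ i ih =>
    intro k
    rw [← (hT k).shift_iff C (i+1) (xv_tensor_proj C _ (hF k) _ C (hC.xv _)) (xv_tensor_proj C _ (hF k) _ C (hC.xv _)),
      ← (h k).shift_iff _ (i+1) (xv_proj _ _ (hF k) _ (by simp)) (xv_proj _ _ (hF k) _ (by simp))]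
    exact ih (k+1)

/-- syzygies of a projective resolution -/
def syzP {L : ModuleCat.{u} R} (P : ProjectiveResolution L) : ℕ → ModuleCat.{u} R
  | 0 => L
  | k+1 => ModuleCat.of R (LinearMap.range (P.complex.d (k+1) k).hom)

/-- inclusion -/
def syzF {L : ModuleCat.{u} R} (P : ProjectiveResolution L) (k : ℕ) : syzP P (k+1) →ₗ[R] P.complex.X k :=
  (LinearMap.range (P.complex.d (k+1) k).hom).subtype

/-- projection -/
def syzG {L : ModuleCat.{u} R} (P : ProjectiveResolution L) : ∀ (k : ℕ), P.complex.X k →ₗ[R] syzP P k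
  | 0 => (P.π.f 0).hom
  | k+1 => (P.complex.d (k+1) k).hom.rangeRestrict

lemma syz_se {L : ModuleCat.{u} R} (P : ProjectiveResolution L) (k : ℕ) : SE (syzF P k) (syzG P k) := by
  refine ⟨Subtype.val_injective, ?_, ?_⟩
  · cases k with
    | zero => exact (ModuleCat.epi_iff_surjective (P.π.f 0)).1 inferInstance
    | succ k => exact LinearMap.surjective_rangeRestrict _
  · cases k with
    | zero =>
      have := P.exact₀
      rw [ShortComplex.moduleCat_exact_iff_range_eq_ker] at this
      exact this.symm.trans (Submodule.range_subtype _).symm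
    | succ k =>
      have := P.exact_succ k
      rw [ShortComplex.moduleCat_exact_iff_range_eq_ker] at this
      exact (LinearMap.ker_rangeRestrict _).trans (this.symm.trans (Submodule.range_subtype _).symm)

lemma syz_inj {L : ModuleCat.{u} R} (C : ModuleCat.{u} R) (P : ProjectiveResolution L)
    (hT : ∀ i : ℕ, 0 < i → Subsingleton (TorM R C L i)) (k : ℕ) :
    Function.Injective ((syzF P k).lTensor C) := by
  have h1 := hT (k+1) (by simp)
  let K := ((((MonoidalCategory.tensoringLeft (ModuleCat.{u} R)).obj C).mapHomologicalComplex (ComplexShape.down ℕ)).obj P.complex)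
  have hz : Limits.IsZero (K.homology (k+1)) := by
    refine Limits.IsZero.of_iso ?_ (P.isoLeftDerivedObj ((MonoidalCategory.tensoringLeft (ModuleCat.{u} R)).obj C) (k+1)).symm
    exact ModuleCat.isZero_of_subsingleton (TorM R C L (k+1))
  have hex : (K.sc' (k+1+1) (k+1) k).Exact := by
    rw [← HomologicalComplex.exactAt_iff' _ _ _ _ (by simp) (by simp), HomologicalComplex.exactAt_iff_isZero_homology]
    exact hz
  rw [ShortComplex.moduleCat_exact_iff] at hex
  have hcomp : syzF P k ∘ₗ syzG P (k+1) = (P.complex.d (k+1) k).hom := rfl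
  rw [← LinearMap.ker_eq_bot, LinearMap.ker_eq_bot']
  intro z hz
  obtain ⟨w, rfl⟩ := LinearMap.lTensor_surjective C (syz_se P (k+1)).2.1 z
  rw [← LinearMap.comp_apply, ← LinearMap.lTensor_comp, hcomp] at hz
  have hv0 : ∃ v : C ⊗[R] (P.complex.X (k+1+1)), (P.complex.d (k+1+1) (k+1)).hom.lTensor C v = w := hex w hz
  obtain ⟨v, hv⟩ := hv0
  rw [← hv, ← LinearMap.comp_apply, ← LinearMap.lTensor_comp]
  have : syzG P (k+1) ∘ₗ (P.complex.d (k+1+1) (k+1)).hom = 0 := by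
    have := (syz_se P (k+1)).comp
    have h2 : (P.complex.d (k+1+1) (k+1)).hom = syzF P (k+1) ∘ₗ syzG P (k+1+1) := rfl
    rw [h2, ← LinearMap.comp_assoc, this, LinearMap.zero_comp]
  rw [this]
  simp

theorem tor_main {C : ModuleCat.{u} R} (hC : IsSemidualizing R C) (L : ModuleCat.{u} R)
    (hT : ∀ i : ℕ, 0 < i → Subsingleton (TorM R C L i)) (i : ℕ) :
    XV (ModuleCat.of R (C ⊗[R] L)) C (i+1) ↔ XV L (ModuleCat.of R R) (i+1) := by
  let P := projectiveResolution L
  exact tor_iff hC (syzP P) P.complex.X (syzF P) (syzG P) (syz_se P)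
    (fun k => (IsProjective.iff_projective _).2 (P.projective k)) (syz_inj C P hT) i 0

end TorPart

section Dual
variable {R}

/-- the `C`-dual -/
abbrev dl (C M : ModuleCat.{u} R) : ModuleCat.{u} R := ModuleCat.of R (M →ₗ[R] C)

/-- precomposition -/
abbrev dm (C : ModuleCat.{u} R) {A B : ModuleCat.{u} R} (f : A →ₗ[R] B) : dl C B →ₗ[R] dl C A :=
  LinearMap.lcomp R C f

lemma SE.desc {A B D : ModuleCat.{u} R} {f : A →ₗ[R] B} {g : B →ₗ[R] D} (h : SE f g)
    {N : ModuleCat.{u} R} (φ : B →ₗ[R] N) (hφ : ∀ a, φ (f a) = 0) : ∃ ψ : D →ₗ[R] N, ∀ b, ψ (g b) = φ b := by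
  have hk : LinearMap.ker g ≤ LinearMap.ker φ := by
    rw [h.2.2]; rintro _ ⟨a, rfl⟩; exact hφ a
  refine ⟨(LinearMap.ker g).liftQ φ hk ∘ₗ (g.quotKerEquivOfSurjective h.2.1).symm.toLinearMap, fun b => ?_⟩
  have : (g.quotKerEquivOfSurjective h.2.1).symm (g b) = Submodule.Quotient.mk b := by
    rw [LinearEquiv.symm_apply_eq]; rfl
  rw [LinearMap.comp_apply, LinearEquiv.coe_coe, this]
  rfl

lemma SE.exact_iff {A B D : ModuleCat.{u} R} {f : A →ₗ[R] B} {g : B →ₗ[R] D} (h : SE f g) {b : B}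
    (hb : g b = 0) : ∃ a, f a = b := by
  have : b ∈ LinearMap.ker g := hb
  rw [h.2.2] at this
  exact this

variable (C : ModuleCat.{u} R)

lemma SE.dual_inj {A B D : ModuleCat.{u} R} {f : A →ₗ[R] B} {g : B →ₗ[R] D} (h : SE f g) :
    Function.Injective (dm C g) := by
  intro x y hxy
  refine LinearMap.ext fun d => ?_
  obtain ⟨b, rfl⟩ := h.2.1 d
  exact LinearMap.congr_fun hxy b

lemma SE.dual_ker {A B D : ModuleCat.{u} R} {f : A →ₗ[R] B} {g : B →ₗ[R] D} (h : SE f g) :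
    LinearMap.ker (dm C f) = LinearMap.range (dm C g) := by
  ext φ
  constructor
  · intro hφ
    obtain ⟨ψ, hψ⟩ := h.desc (N := C) φ (fun a => LinearMap.congr_fun hφ a)
    exact ⟨ψ, LinearMap.ext hψ⟩
  · rintro ⟨ψ, rfl⟩
    refine LinearMap.ext fun a => ?_
    have := LinearMap.congr_fun h.comp a
    change ψ (g (f a)) = 0
    rw [show g (f a) = 0 from this, map_zero]

lemma SE.dual {A B D : ModuleCat.{u} R} {f : A →ₗ[R] B} {g : B →ₗ[R] D} (h : SE f g)
    (hs : Function.Surjective (dm C f)) : SE (dm C g) (dm C f) :=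
  ⟨h.dual_inj C, hs, h.dual_ker C⟩

/-- image of the dual map -/
abbrev imd {A B : ModuleCat.{u} R} (f : A →ₗ[R] B) : ModuleCat.{u} R := ModuleCat.of R (LinearMap.range (dm C f))

lemma SE.dual_im {A B D : ModuleCat.{u} R} {f : A →ₗ[R] B} {g : B →ₗ[R] D} (h : SE f g) :
    SE (B := dl C B) (D := imd C f) (dm C g) (dm C f).rangeRestrict :=
  ⟨h.dual_inj C, LinearMap.surjective_rangeRestrict _, (LinearMap.ker_rangeRestrict _).trans (h.dual_ker C)⟩

lemma quot_se {B : ModuleCat.{u} R} (N : Submodule R B) : SE (A := ModuleCat.of R N) (B := B) (D := ModuleCat.of R (B ⧸ N)) N.subtype N.mkQ :=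
  ⟨Subtype.val_injective, Submodule.mkQ_surjective N, by simp⟩

/-- evaluation -/
abbrev evl {M : ModuleCat.{u} R} (m : M) : dl C M →ₗ[R] C := bidualityMap R C M m

lemma bid_surj_iff {X M : ModuleCat.{u} R} {g : X →ₗ[R] M} (hg : Function.Surjective g)
    (hX : Function.Surjective (bidualityMap R C X)) :
    (∀ φ : dl C M →ₗ[R] C, ∃ ψ : dl C X →ₗ[R] C, ψ ∘ₗ dm C g = φ) ↔ Function.Surjective (bidualityMap R C M) := by
  constructor
  · intro H φ
    obtain ⟨ψ, hψ⟩ := H φ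
    obtain ⟨x, hx⟩ := hX ψ
    refine ⟨g x, ?_⟩
    rw [← hψ, ← hx]
    rfl
  · intro H φ
    obtain ⟨m, rfl⟩ := H φ
    obtain ⟨x, rfl⟩ := hg m
    exact ⟨bidualityMap R C X x, rfl⟩

lemma bid_inj {M : ModuleCat.{u} R} : Function.Injective (bidualityMap R C M) ↔ ∀ m : M, (∀ φ : M →ₗ[R] C, φ m = 0) → m = 0 := by
  rw [← LinearMap.ker_eq_bot, LinearMap.ker_eq_bot']
  refine forall_congr' fun m => imp_congr_left ?_
  exact ⟨fun h φ => LinearMap.congr_fun h φ, fun h => LinearMap.ext h⟩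

variable {C}

lemma IsTotallyCReflexive.xv {X : ModuleCat.{u} R} (h : IsTotallyCReflexive R C X) (i : ℕ) : XV X C (i+1) :=
  (extM_iff _ _ _).1 (h.2.2.1 _ (by simp))

lemma IsTotallyCReflexive.xvd {X : ModuleCat.{u} R} (h : IsTotallyCReflexive R C X) (i : ℕ) : XV (dl C X) C (i+1) :=
  (extM_iff _ _ _).1 (h.2.2.2 _ (by simp))

lemma IsTotallyCReflexive.sep {X : ModuleCat.{u} R} (h : IsTotallyCReflexive R C X) {x y : X}
    (hxy : ∀ φ : X →ₗ[R] C, φ x = φ y) : x = y :=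
  h.2.1.1 (LinearMap.ext hxy)

theorem dual_base {K X M : ModuleCat.{u} R} {f : K →ₗ[R] X} {g : X →ₗ[R] M} (h : SE f g)
    (hX : IsTotallyCReflexive R C X) (hK : IsTotallyCReflexive R C K)
    (E : ModuleCat.{u} R) (e : E ≃ₗ[R] Abelian.Ext M C 1) :
    XV E C 0 ∧ (XV E C 1 ↔ Function.Injective (bidualityMap R C M)) ∧
    (XV E C 2 ↔ Function.Surjective (bidualityMap R C M)) ∧
    ∀ j, (XV E C (j+3) ↔ XV (dl C M) C (j+1)) := by
  obtain ⟨e1⟩ := h.one C (hX.xv 0)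
  have s1 := quot_se (B := dl C K) (LinearMap.range (dm C f))
  have s2 := h.dual_im C
  have ee : E ≃ₗ[R] ModuleCat.of R (dl C K ⧸ (LinearMap.range (dm C f))) := e ≪≫ₗ e1.symm
  simp only [xv_congr C ee]
  refine ⟨?_, ?_, ?_, ?_⟩
  · rw [xv_zero_iff]
    refine subsingleton_of_forall_eq 0 fun φ => ?_
    obtain ⟨k, hk⟩ := hK.2.1.2 (φ ∘ₗ Submodule.mkQ _)
    have hk' : ∀ χ : K →ₗ[R] C, χ k = φ (Submodule.Quotient.mk χ) := fun χ => LinearMap.congr_fun hk χ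
    have : f k = 0 := hX.sep fun ψ => by
      have := hk' (dm C f ψ)
      have hz : (Submodule.Quotient.mk (dm C f ψ) : (K →ₗ[R] C) ⧸ LinearMap.range (dm C f)) = 0 :=
        (Submodule.Quotient.mk_eq_zero _).2 ⟨ψ, rfl⟩
      rw [map_zero]
      exact this.trans ((congrArg φ hz).trans (map_zero φ))
    have k0 : k = 0 := h.1 (by rw [this, map_zero])
    refine LinearMap.ext fun q => ?_
    obtain ⟨χ, rfl⟩ := Submodule.Quotient.mk_surjective _ q
    rw [← hk', k0, map_zero]
    rfl
  · rw [s1.one_iff C (hK.xvd 0), bid_inj]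
    constructor
    · intro H m hm
      obtain ⟨x, rfl⟩ := h.2.1 m
      obtain ⟨φ, hφ⟩ := s2.desc (evl C x) (fun χ => hm χ)
      obtain ⟨ψ, hψ⟩ := H φ
      obtain ⟨k, rfl⟩ := hK.2.1.2 ψ
      have : x = f k := hX.sep fun χ => by
        have h1 := hφ χ
        rw [← hψ] at h1
        exact h1.symm
      rw [this]
      exact LinearMap.congr_fun h.comp k
    · intro H φ
      obtain ⟨x, hx⟩ := hX.2.1.2 (φ ∘ₗ (dm C f).rangeRestrict)
      have hx' : ∀ χ : X →ₗ[R] C, χ x = φ ((dm C f).rangeRestrict χ) := fun χ => LinearMap.congr_fun hx χ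
      have hg0 : g x = 0 := H _ fun χ => by
        refine (hx' (χ ∘ₗ g)).trans ?_
        have : (dm C f).rangeRestrict (χ ∘ₗ g) = 0 := LinearMap.congr_fun s2.comp χ
        rw [this, map_zero]
      obtain ⟨k, rfl⟩ := h.exact_iff hg0
      refine ⟨evl C k, LinearMap.ext fun z => ?_⟩
      obtain ⟨χ, rfl⟩ := s2.2.1 z
      exact hx' χ
  · rw [← s1.shift_iff C 1 (hK.xvd 0) (hK.xvd 1), s2.one_iff C (hX.xvd 0), ← bid_surj_iff C h.2.1 hX.2.1.2]
  · intro j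
    rw [← s1.shift_iff C (j+2) (hK.xvd _) (hK.xvd _), ← s2.shift_iff C (j+1) (hX.xvd _) (hX.xvd _)]

theorem dual_main (n : ℕ) : ∀ (M : ModuleCat.{u} R), gcdimLE R C (n+1) M → (∀ i, 0 < i → i < n+1 → XV M C i) →
    ∀ (E : ModuleCat.{u} R), (E ≃ₗ[R] Abelian.Ext M C (n+1)) →
    (∀ j, j < n+1 → XV E C j) ∧ (XV E C (n+1) ↔ Function.Injective (bidualityMap R C M)) ∧
    (XV E C (n+2) ↔ Function.Surjective (bidualityMap R C M)) ∧
    ∀ j, (XV E C (n+3+j) ↔ XV (dl C M) C (j+1)) := by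
  induction n with
  | zero =>
    rintro M ⟨X, K, f, g, hf, hg, hfg, hX, hK⟩ - E e
    obtain ⟨a, b, c, d⟩ := dual_base (C := C) (f := f) (g := g) ⟨hf, hg, hfg⟩ hX hK E e
    refine ⟨fun j hj => ?_, b, c, fun j => ?_⟩
    · obtain rfl : j = 0 := by omega
      exact a
    · rw [show 0 + 3 + j = j + 3 by omega]
      exact d j
  | succ n ih =>
    rintro M ⟨X, K, f, g, hf, hg, hfg, hX, hK⟩ hM E e
    have h : SE f g := ⟨hf, hg, hfg⟩
    have hKM : ∀ i, XV K C (i+1) ↔ XV M C (i+2) := fun i => h.shift_iff C (i+1) (hX.xv _) (hX.xv _)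
    obtain ⟨e1⟩ := h.shift C (n+1) (hX.xv _) (hX.xv _)
    have s := h.dual C (fun φ => h.extend C (hM 1 (by omega) (by omega)) φ)
    obtain ⟨a, b, c, d⟩ := ih K hK (fun i hi hi2 => by
      obtain ⟨i, rfl⟩ := Nat.exists_eq_succ_of_ne_zero hi.ne'
      exact (hKM i).2 (hM _ (by omega) (by omega))) E (e ≪≫ₗ e1.symm)
    refine ⟨?_, ?_, ?_, ?_⟩
    · intro j hj
      rcases Nat.lt_or_ge j (n+1) with hj' | hj'
      · exact a j hj'
      · obtain rfl : j = n+1 := by omega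
        rw [b, bid_inj]
        intro k hk
        have : f k = 0 := hX.sep fun ψ => by
          rw [map_zero]; exact hk (ψ ∘ₗ f)
        exact h.1 (by rw [this, map_zero])
    · rw [c, bid_inj]
      constructor
      · intro H m hm
        obtain ⟨x, rfl⟩ := h.2.1 m
        obtain ⟨φ, hφ⟩ := s.desc (evl C x) (fun χ => hm χ)
        obtain ⟨k, rfl⟩ := H φ
        have : x = f k := hX.sep fun χ => (hφ χ).symm
        rw [this]
        exact LinearMap.congr_fun h.comp k
      · intro H φ
        obtain ⟨x, hx⟩ := hX.2.1.2 (φ ∘ₗ dm C f)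
        have hx' : ∀ χ : X →ₗ[R] C, χ x = φ (dm C f χ) := fun χ => LinearMap.congr_fun hx χ
        have hg0 : g x = 0 := H _ fun χ => by
          refine (hx' (χ ∘ₗ g)).trans ?_
          have : dm C f (χ ∘ₗ g) = 0 := LinearMap.congr_fun s.comp χ
          rw [this, map_zero]
        obtain ⟨k, rfl⟩ := h.exact_iff hg0
        refine ⟨k, LinearMap.ext fun z => ?_⟩
        obtain ⟨χ, rfl⟩ := s.2.1 z
        exact hx' χ
    · have := d 0
      rw [show n+3+0 = n+1+2 by omega] at this
      rw [this, ← bid_surj_iff C h.2.1 hX.2.1.2]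
      have h1 := s.one_iff C (hX.xvd 0)
      exact h1
    · intro j
      rw [show n+1+3+j = n+3+(j+1) by omega, d (j+1)]
      exact (s.shift_iff C (j+1) (hX.xvd _) (hX.xvd _)).symm

lemma gcdim_vanish (n : ℕ) : ∀ (M : ModuleCat.{u} R), gcdimLE R C n M → ∀ i, n < i → XV M C i := by
  induction n with
  | zero =>
    intro M hM i hi
    obtain ⟨i, rfl⟩ := Nat.exists_eq_succ_of_ne_zero hi.ne'
    exact IsTotallyCReflexive.xv hM i
  | succ n ih =>
    rintro M ⟨X, K, f, g, hf, hg, hfg, hX, hK⟩ i hi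
    have h : SE f g := ⟨hf, hg, hfg⟩
    obtain ⟨i, rfl⟩ : ∃ k, i = k + 2 := ⟨i - 2, by omega⟩
    exact (h.shift_iff C (i+1) (hX.xv _) (hX.xv _)).1 (ih K hK (i+1) (by omega))

end Dual

section Grade
variable {R}
variable {C : ModuleCat.{u} R}

lemma IsSemidualizing.sub_of_hom [IsNoetherianRing R] (hC : IsSemidualizing R C) (W : Type u) [AddCommGroup W] [Module R W]
    [Module.Finite R W] (h : Subsingleton (C →ₗ[R] W)) : Subsingleton W := by
  have := hC.1
  obtain ⟨r, hr, hreg⟩ := IsSMulRegular.subsingleton_linearMap_iff.1 h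
  have : r = 0 := hC.faithful fun c => by rw [Module.mem_annihilator.1 hr c, zero_smul]
  subst this
  exact ⟨fun a b => hreg (by simp)⟩

lemma grade_one [IsNoetherianRing R] (hC : IsSemidualizing R C) {E' Q E : ModuleCat.{u} R} {f : E' →ₗ[R] Q} {g : Q →ₗ[R] E}
    (h : SE f g) (hQ : Module.Projective R Q) (hE' : Module.Finite R E')
    (hv : ∀ j, XV C (dl C E) (j+1)) : XV E C 1 ↔ XV E (ModuleCat.of R R) 1 := by
  rw [h.one_iff C (xv_proj _ _ hQ 1 (by simp)), h.one_iff _ (xv_proj _ _ hQ 1 (by simp))]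
  constructor
  · intro H φ
    have s := h.dual C H
    obtain ⟨Ψ, hΨ⟩ := s.lift C (hv 0) ((LinearMap.lsmul R C ∘ₗ φ).flip)
    obtain ⟨χ, hχ⟩ := hC.hom_repr (LinearMap.flip (Ψ : C →ₗ[R] Q →ₗ[R] C))
    refine ⟨χ, LinearMap.ext fun a => hC.faithful fun c => ?_⟩
    have h1 : Ψ c (f a) = φ a • c := LinearMap.congr_fun (LinearMap.congr_fun hΨ c) a
    have h2 : Ψ c (f a) = χ (f a) • c := hχ (f a) c
    exact h2.symm.trans h1
  · intro H
    have s1 := quot_se (B := dl C E') (LinearMap.range (dm C f))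
    have s2 := h.dual_im C
    have hB : XV C (imd C f) 1 := s2.cov C 1 (xv_hom_proj C Q hQ 0 C (hC.xv 0)) (hv 1)
    have := hC.1
    have hfin : Module.Finite R (E' →ₗ[R] C) := inferInstance
    have : Subsingleton ((E' →ₗ[R] C) ⧸ (LinearMap.range (dm C f))) := by
      apply hC.sub_of_hom
      refine subsingleton_of_forall_eq 0 fun φ => ?_
      obtain ⟨ψ, hψ⟩ := s1.lift C hB φ
      obtain ⟨χ, hχ⟩ := hC.hom_repr (LinearMap.flip (ψ : C →ₗ[R] E' →ₗ[R] C))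
      obtain ⟨ξ, hξ⟩ := H χ
      rw [← hψ]
      refine LinearMap.ext fun c => ?_
      refine (Submodule.Quotient.mk_eq_zero _).2 ⟨(LinearMap.lsmul R C ∘ₗ ξ).flip c, ?_⟩
      refine LinearMap.ext fun a => ?_
      refine Eq.trans ?_ (hχ a c).symm
      rw [← hξ]
      rfl
    rw [Submodule.Quotient.subsingleton_iff, LinearMap.range_eq_top] at this
    exact this

theorem grade_main [IsNoetherianRing R] (hC : IsSemidualizing R C) (k : ℕ) : ∀ (E : ModuleCat.{u} R), Module.Finite R E →
    (∀ j, XV C (dl C E) (j+1)) → ((∀ i, i < k → XV E C (i+1)) ↔ (∀ i, i < k → XV E (ModuleCat.of R R) (i+1))) := by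
  induction k with
  | zero => intro E _ _; simp
  | succ k ih =>
    intro E hE hv
    obtain ⟨E', Q, f, g, h, hQ, hQf, hE'⟩ := exists_fin_cover E hE
    have h1 := grade_one hC h hQ hE' hv
    have hs : ∀ N : ModuleCat.{u} R, (∀ i, i < k+1 → XV E N (i+1)) ↔ XV E N 1 ∧ ∀ i, i < k → XV E' N (i+1) := by
      intro N
      constructor
      · intro H
        refine ⟨H 0 (by omega), fun i hi => ?_⟩
        exact (h.shift_iff N (i+1) (xv_proj _ _ hQ _ (by simp)) (xv_proj _ _ hQ _ (by simp))).2 (H (i+1) (by omega))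
      · rintro ⟨H0, H⟩ i hi
        cases i with
        | zero => exact H0
        | succ i => exact (h.shift_iff N (i+1) (xv_proj _ _ hQ _ (by simp)) (xv_proj _ _ hQ _ (by simp))).1 (H i (by omega))
    rw [hs, hs, ← h1]
    refine and_congr_right fun H0 => ih E' hE' fun j => ?_
    have s := h.dual C (fun φ => h.extend C H0 φ)
    exact s.cov C (j+1) (xv_hom_proj C Q hQ j C (hC.xv j)) (hv (j+1))

/-- grade comparison when `Hom(E,C) = 0`. -/
theorem grade_cmp [IsNoetherianRing R] (hC : IsSemidualizing R C) (E : ModuleCat.{u} R) (hE : Module.Finite R E)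
    (h0 : XV E C 0) (k : ℕ) : (∀ i, i < k → XV E C i) ↔ (∀ i, i < k → XV E (ModuleCat.of R R) i) := by
  have h0' := (xv_zero_iff _ _).1 h0
  have hR0 : XV E (ModuleCat.of R R) 0 := by
    rw [xv_zero_iff]
    refine subsingleton_of_forall_eq 0 fun φ => LinearMap.ext fun x => hC.faithful fun c => ?_
    have : (LinearMap.toSpanSingleton R C c ∘ₗ φ) = 0 := Subsingleton.elim _ _
    have := LinearMap.congr_fun this x
    have h2 : φ x • c = 0 := this
    rw [h2]
    exact (zero_smul R c).symm
  have hv : ∀ j, XV C (dl C E) (j+1) := by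
    intro j
    refine subsingleton_of_forall_eq 0 fun x => ?_
    have hz : 𝟙 (dl C E) = 0 :=
      ModuleCat.hom_ext (LinearMap.ext fun φ => (Subsingleton.elim (α := E →ₗ[R] C) _ _))
    have : x = x.comp (Abelian.Ext.mk₀ (𝟙 _)) (add_zero _) := by simp
    rw [this, hz]
    simp
  cases k with
  | zero => simp
  | succ k =>
    have := grade_main hC k E hE hv
    have hs : ∀ N : ModuleCat.{u} R, XV E N 0 → ((∀ i, i < k+1 → XV E N i) ↔ ∀ i, i < k → XV E N (i+1)) := by
      intro N hN
      constructor
      · intro H i hi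
        exact H _ (by omega)
      · intro H i hi
        cases i with
        | zero => exact hN
        | succ i => exact H i (by omega)
    rw [hs _ h0, hs _ hR0, this]

end Grade

section Link

variable {R}

/-- superfluous submodule -/
def Sf {P : Type u} [AddCommGroup P] [Module R P] (K : Submodule R P) : Prop :=
  ∀ N : Submodule R P, N ⊔ K = ⊤ → N = ⊤

lemma Sf.jac {P : Type u} [AddCommGroup P] [Module R P] {K : Submodule R P} (hK : Sf K)
    (f : P →ₗ[R] R) (x : P) (hx : x ∈ K) : f x ∈ Ideal.jacobson (⊥ : Ideal R) := by
  rw [Ideal.jacobson, Ideal.mem_sInf]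
  rintro m ⟨-, hm⟩
  by_contra hfx
  obtain ⟨r, i, hi, hri⟩ := hm.exists_inv hfx
  have : Submodule.comap f m = ⊤ := by
    refine hK _ (eq_top_iff.2 fun y _ => ?_)
    have hy : y = (y - (f y * r) • x) + (f y * r) • x := by abel
    rw [hy]
    refine Submodule.add_mem_sup ?_ (Submodule.smul_mem _ _ hx)
    rw [Submodule.mem_comap, map_sub, map_smul]
    have : f y - (f y * r) • f x = f y * i := by
      rw [smul_eq_mul]
      linear_combination (- f y) * hri
    rw [this]
    exact Ideal.mul_mem_left _ _ hi
  have hx2 : x ∈ Submodule.comap f m := by rw [this]; trivial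
  exact hfx hx2

lemma sf_dual {P : Type u} [AddCommGroup P] [Module R P] [Module.Finite R P] [Module.Projective R P]
    (W : Submodule R (P →ₗ[R] R)) (hW : ∀ f ∈ W, ∀ x, f x ∈ Ideal.jacobson (⊥ : Ideal R)) : Sf W := by
  have hle : W ≤ Ideal.jacobson (⊥ : Ideal R) • (⊤ : Submodule R (P →ₗ[R] R)) := by
    intro f hf
    obtain ⟨n, g, s, -, -, hgs⟩ := Module.Finite.exists_comp_eq_id_of_projective R P
    have : f = ∑ i, f (g (Pi.single i 1)) • (LinearMap.proj i ∘ₗ s) := by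
      ext x
      have hx : x = g (s x) := (LinearMap.congr_fun hgs x).symm
      conv_lhs => rw [hx, pi_eq_sum_univ' (s x)]
      simp [mul_comm]
    rw [this]
    exact Submodule.sum_mem _ fun i _ => Submodule.smul_mem_smul (hW f hf _) trivial
  intro N hN
  rw [eq_top_iff]
  refine Submodule.le_of_le_smul_of_le_jacobson_bot Module.Finite.fg_top le_rfl ?_
  rw [← hN]
  exact sup_le_sup le_rfl (hN.symm ▸ hle)

lemma sf_range {P1 P0 M : ModuleCat.{u} R} {d : P1 →ₗ[R] P0} {π : P0 →ₗ[R] M}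
    (h : IsMinimalPresentation R d π) : Sf (LinearMap.range (LinearMap.lcomp R R d)) := by
  obtain ⟨h1, h0, hπ, hr, hp, -⟩ := h
  refine sf_dual _ ?_
  rintro _ ⟨f, rfl⟩ x
  refine Sf.jac (K := LinearMap.ker π) hπ.2.2 f (d x) ?_
  rw [← hr]
  exact ⟨x, rfl⟩

/-- The `λ`-module of a presentation. -/
abbrev lam {P1 P0 : ModuleCat.{u} R} (d : P1 →ₗ[R] P0) : ModuleCat.{u} R :=
  ModuleCat.of R (LinearMap.range (LinearMap.lcomp R R d))

lemma isLambda_lam {P1 P0 M : ModuleCat.{u} R} {d : P1 →ₗ[R] P0} {π : P0 →ₗ[R] M}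
    (h : IsMinimalPresentation R d π) : IsLambda R M (lam d) := by
  have := h.1
  have := h.2.2.2.2.1
  refine ⟨ModuleCat.of R ((P1 →ₗ[R] R) ⧸ LinearMap.range (LinearMap.lcomp R R d)),
    ⟨P1, P0, d, π, h, ⟨LinearEquiv.refl _ _⟩⟩,
    ModuleCat.of R (P1 →ₗ[R] R), Submodule.mkQ _, ?_, ⟨?_, ?_, ?_⟩, ⟨?_⟩⟩
  · change Module.Finite R (Module.Dual R P1)
    infer_instance
  · change Module.Projective R (Module.Dual R P1)
    infer_instance
  · exact Submodule.mkQ_surjective _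
  · have := sf_range h
    rw [Submodule.ker_mkQ]
    exact this
  · exact LinearEquiv.ofEq _ _ (Submodule.ker_mkQ _).symm

lemma sf_of_cover {P L Q : Type u} [AddCommGroup P] [Module R P] [AddCommGroup L] [Module R L]
    [AddCommGroup Q] [Module R Q] [Module.Projective R P] [Module.Projective R Q]
    (p : P →ₗ[R] L) (hp : Function.Surjective p) (q : Q →ₗ[R] L) (hq : Function.Surjective q)
    (hs : Sf (LinearMap.ker q))
    (he : ∀ e : P →ₗ[R] P, e ∘ₗ e = e → p ∘ₗ e = 0 → e = 0) : Sf (LinearMap.ker p) := by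
  obtain ⟨h, hh⟩ := Module.projective_lifting_property q p hq
  have key : ∀ N : Submodule R P, N ⊔ LinearMap.ker p = ⊤ → Submodule.map h N = ⊤ := by
    intro N hN
    refine hs _ (eq_top_iff.2 fun y _ => ?_)
    obtain ⟨x, hx⟩ := hp (q y)
    have hx' : x ∈ N ⊔ LinearMap.ker p := hN ▸ trivial
    obtain ⟨a, ha, b, hb, rfl⟩ := Submodule.mem_sup.1 hx'
    have hy : y = h a + (y - h a) := by abel
    rw [hy]
    refine Submodule.add_mem_sup ⟨a, ha, rfl⟩ ?_
    have hqa : q (h a) = p a := LinearMap.congr_fun hh a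
    rw [map_add, LinearMap.mem_ker.1 hb, add_zero] at hx
    rw [LinearMap.mem_ker, map_sub, hqa, hx, sub_self]
  have hsurj : Function.Surjective h := by
    rw [← LinearMap.range_eq_top, LinearMap.range_eq_map]
    exact key ⊤ (by simp)
  obtain ⟨s, hs'⟩ := Module.projective_lifting_property h LinearMap.id hsurj
  have hs2 : ∀ y, h (s y) = y := fun y => LinearMap.congr_fun hs' y
  have h0 := he (LinearMap.id - s ∘ₗ h) (by ext x; simp [hs2]) (by
    rw [← hh]
    ext x
    simp [hs2])
  have hinj : Function.Injective h := by
    intro x y hxy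
    have e1 := LinearMap.congr_fun h0 x
    have e2 := LinearMap.congr_fun h0 y
    simp only [LinearMap.sub_apply, LinearMap.id_apply, LinearMap.comp_apply, LinearMap.zero_apply] at e1 e2
    rw [sub_eq_zero] at e1 e2
    rw [e1, e2, hxy]
  intro N hN
  have := key N hN
  rw [eq_top_iff]
  intro x _
  have hx : h x ∈ Submodule.map h N := this ▸ trivial
  obtain ⟨y, hy, hyx⟩ := hx
  exact hinj hyx ▸ hy

lemma stable_idem {M P : ModuleCat.{u} R} (hM : IsStable R M) [Module.Projective R P]
    (π : P →ₗ[R] M) (hπ : Function.Surjective π) (e : P →ₗ[R] P) (hee : e ∘ₗ e = e)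
    (hk : LinearMap.ker π ≤ LinearMap.ker e) : e = 0 := by
  let e' : M →ₗ[R] P := ((LinearMap.ker π).liftQ e hk) ∘ₗ (π.quotKerEquivOfSurjective hπ).symm.toLinearMap
  have he' : ∀ x, e' (π x) = e x := by
    intro x
    have : (π.quotKerEquivOfSurjective hπ).symm (π x) = Submodule.Quotient.mk x := by
      rw [LinearEquiv.symm_apply_eq]
      rfl
    simp only [e', LinearMap.comp_apply, LinearEquiv.coe_coe, this]
    rfl
  let a : M →ₗ[R] LinearMap.range e' := e'.rangeRestrict
  let b : LinearMap.range e' →ₗ[R] M := π ∘ₗ Submodule.subtype _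
  have hab : ∀ y, a (b y) = y := by
    rintro ⟨_, m, rfl⟩
    obtain ⟨x, rfl⟩ := hπ m
    apply Subtype.ext
    change e' (π (e' (π x))) = e' (π x)
    rw [he', he']
    exact LinearMap.congr_fun hee x
  have hproj : Module.Projective R (LinearMap.range e') := by
    refine Module.Projective.of_split (Submodule.subtype _) (a ∘ₗ π) ?_
    ext y
    exact congrArg Subtype.val (hab y)
  let c : M →ₗ[R] LinearMap.ker a := LinearMap.codRestrict _ (LinearMap.id - b ∘ₗ a) (by
    intro x
    rw [LinearMap.mem_ker, LinearMap.sub_apply, map_sub, LinearMap.comp_apply, hab]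
    simp)
  have hbij : Function.Bijective (a.prod c) := by
    constructor
    · rw [injective_iff_map_eq_zero]
      intro x hx
      have h1 : a x = 0 := congrArg Prod.fst hx
      have h2 : x - b (a x) = 0 := congrArg Subtype.val (congrArg Prod.snd hx)
      rw [h1, map_zero, sub_zero] at h2
      exact h2
    · rintro ⟨y, z, hz⟩
      refine ⟨b y + z, Prod.ext ?_ (Subtype.ext ?_)⟩
      · change a (b y + z) = y
        rw [map_add, hab, LinearMap.mem_ker.1 hz, add_zero]
      · change (b y + z) - b (a (b y + z)) = z
        rw [map_add, hab, LinearMap.mem_ker.1 hz, add_zero]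
        abel
  have hss := hM (ModuleCat.of R (LinearMap.range e')) (ModuleCat.of R (LinearMap.ker a)) hproj
    ⟨LinearEquiv.ofBijective _ hbij⟩
  ext x
  have : (a (π x) : LinearMap.range e') = 0 := Subsingleton.elim (α := LinearMap.range e') _ _
  have := congrArg Subtype.val this
  change e' (π x) = 0 at this
  rw [he'] at this
  exact this

lemma dual_idem {M P1 P : ModuleCat.{u} R} (hM : IsStable R M) [Module.Finite R P] [Module.Projective R P]
    (d : P1 →ₗ[R] P) (π : P →ₗ[R] M) (hπ : Function.Surjective π)
    (hr : LinearMap.range d = LinearMap.ker π) (e : (P →ₗ[R] R) →ₗ[R] (P →ₗ[R] R)) (hee : e ∘ₗ e = e)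
    (hk : ∀ f x, e f (d x) = 0) : e = 0 := by
  let e' : P →ₗ[R] P := (Module.evalEquiv R P).symm.toLinearMap ∘ₗ (LinearMap.lcomp R R e) ∘ₗ (Module.evalEquiv R P).toLinearMap
  have he' : ∀ x (f : P →ₗ[R] R), f (e' x) = e f x := by
    intro x f
    have : Module.evalEquiv R P (e' x) = (LinearMap.lcomp R R e) (Module.evalEquiv R P x) := by
      simp only [e', LinearMap.comp_apply, LinearEquiv.coe_coe, LinearEquiv.apply_symm_apply]
    exact LinearMap.congr_fun this f
  have hsep : ∀ x y : P, (∀ f : P →ₗ[R] R, f x = f y) → x = y := fun x y hxy =>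
    (Module.evalEquiv R P).injective (LinearMap.ext hxy)
  have h0 : e' = 0 := by
    refine stable_idem hM π hπ e' ?_ ?_
    · refine LinearMap.ext fun x => hsep _ _ fun f => ?_
      rw [LinearMap.comp_apply, he', he', he']
      exact LinearMap.congr_fun (LinearMap.congr_fun hee f) x
    · rw [← hr]
      rintro _ ⟨x, rfl⟩
      rw [LinearMap.mem_ker]
      refine hsep _ _ fun f => ?_
      rw [he', hk, map_zero]
  refine LinearMap.ext fun f => LinearMap.ext fun x => ?_
  rw [← he', h0]
  simp

/-- torsionless -/
def TL (M : ModuleCat.{u} R) : Prop := ∀ m : M, (∀ f : M →ₗ[R] R, f m = 0) → m = 0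

lemma TL_of_linked (M : ModuleCat.{u} R) (h : IsHorizontallyLinked R M) : TL M := by
  obtain ⟨L, L2, -, ⟨T, -, P, π, hPf, hP, ⟨e⟩⟩, ⟨e'⟩⟩ := h
  intro m hm
  have := hP.1
  have hz : ((e (e' m)) : P) = 0 := by
    rw [← Module.forall_dual_apply_eq_zero_iff (R := R)]
    intro φ
    exact hm (φ ∘ₗ Submodule.subtype _ ∘ₗ e.toLinearMap ∘ₗ e'.toLinearMap)
  have : e (e' m) = 0 := Subtype.ext hz
  simpa using this

lemma exists_pres [IsNoetherianRing R] (hsp : IsSemiperfectRing R) (M : ModuleCat.{u} R)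
    {P0 : ModuleCat.{u} R} (h0 : Module.Finite R P0) (π : P0 →ₗ[R] M) (hπ : IsProjectiveCover R π) :
    ∃ (P1 : ModuleCat.{u} R) (d : P1 →ₗ[R] P0), IsMinimalPresentation R d π := by
  obtain ⟨P1, q, hf, hq⟩ := hsp (ModuleCat.of R (LinearMap.ker π))
    (by change Module.Finite R (LinearMap.ker π); infer_instance)
  have hk : LinearMap.ker (Submodule.subtype (LinearMap.ker π) ∘ₗ q) = LinearMap.ker q := by
    ext x
    simp only [LinearMap.mem_ker, LinearMap.comp_apply]
    exact ⟨fun h => Subtype.ext h, fun h => congrArg Subtype.val h⟩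
  refine ⟨P1, Submodule.subtype (LinearMap.ker π) ∘ₗ q, hf, h0, hπ, ?_, hq.1, ?_⟩
  · ext x
    constructor
    · rintro ⟨y, rfl⟩
      exact (q y).2
    · intro hx
      obtain ⟨y, hy⟩ := hq.2.1 ⟨x, hx⟩
      exact ⟨y, congrArg Subtype.val hy⟩
  · rw [hk]
    exact hq.2.2

lemma cover_lcomp [IsNoetherianRing R] (hsp : IsSemiperfectRing R) {P1 P0 M : ModuleCat.{u} R}
    (hM : IsStable R M) {d : P1 →ₗ[R] P0} {π : P0 →ₗ[R] M}
    (h : IsMinimalPresentation R d π) : Sf (LinearMap.ker (LinearMap.lcomp R R d)) := by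
  have h1 := h.1
  have h0 := h.2.1
  have hP0 := h.2.2.1.1
  have hπ := h.2.2.1.2.1
  have hr := h.2.2.2.1
  have hDf : Module.Finite R (P0 →ₗ[R] R) := inferInstanceAs (Module.Finite R (Module.Dual R P0))
  have hDp : Module.Projective R (P0 →ₗ[R] R) := inferInstanceAs (Module.Projective R (Module.Dual R P0))
  have hLf : Module.Finite R (LinearMap.range (LinearMap.lcomp R R d)) :=
    Module.Finite.of_surjective _ (LinearMap.surjective_rangeRestrict (LinearMap.lcomp R R d))
  obtain ⟨Q, q, hQf, hQ⟩ := hsp (lam d) hLf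
  have := hQ.1
  have key := sf_of_cover (LinearMap.lcomp R R d).rangeRestrict (LinearMap.surjective_rangeRestrict _) q hQ.2.1 hQ.2.2
    (fun e hee hpe => dual_idem hM d π hπ hr e hee fun f x => by
      have h3 := congrArg Subtype.val (LinearMap.congr_fun hpe f)
      exact LinearMap.congr_fun h3 x)
  rw [LinearMap.ker_rangeRestrict] at key
  exact key

lemma linked_of_TL [IsNoetherianRing R] (hsp : IsSemiperfectRing R) {P1 P0 M : ModuleCat.{u} R}
    (hM : IsStable R M) {d : P1 →ₗ[R] P0} {π : P0 →ₗ[R] M}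
    (h : IsMinimalPresentation R d π) (ht : TL M) : IsHorizontallyLinked R M := by
  have h1 := h.1
  have h0 := h.2.1
  have hP0 := h.2.2.1.1
  have hP1 := h.2.2.2.2.1
  have hπ := h.2.2.1.2.1
  have hr := h.2.2.2.1
  have hDf : Module.Finite R (Module.Dual R P0) := inferInstance
  have hDp : Module.Projective R (Module.Dual R P0) := inferInstance
  have hD1f : Module.Finite R (Module.Dual R P1) := inferInstance
  let PD : ModuleCat.{u} R := ModuleCat.of R (P0 →ₗ[R] R)
  let p : PD →ₗ[R] lam d := (LinearMap.lcomp R R d).rangeRestrict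
  have hpk : ∀ f : P0 →ₗ[R] R, f ∈ LinearMap.ker p ↔ ∀ x, f (d x) = 0 := by
    intro f
    rw [LinearMap.mem_ker]
    constructor
    · intro hf x
      exact LinearMap.congr_fun (congrArg Subtype.val hf) x
    · intro hf
      exact Subtype.ext (LinearMap.ext hf)
  have hp : Function.Surjective p := LinearMap.surjective_rangeRestrict _
  have hLf : Module.Finite R (lam d) := Module.Finite.of_surjective (M := PD) p hp
  have hpc : IsProjectiveCover R p := by
    refine ⟨hDp, hp, ?_⟩
    have key := cover_lcomp hsp hM h
    rw [← LinearMap.ker_rangeRestrict] at key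
    exact key
  obtain ⟨Q, d2, h2⟩ := exists_pres hsp (lam d) (P0 := PD) hDf p hpc
  have hr2 := h2.2.2.2.1
  refine ⟨lam d, lam d2, isLambda_lam h, isLambda_lam h2, ⟨?_⟩⟩
  let γ : P0 →ₗ[R] (Q →ₗ[R] R) := LinearMap.lcomp R R d2 ∘ₗ (Module.evalEquiv R P0).toLinearMap
  have hγr : LinearMap.range γ = LinearMap.range (LinearMap.lcomp R R d2) := by
    rw [LinearMap.range_comp_of_range_eq_top]
    exact LinearEquiv.range _
  have hγk : LinearMap.ker π = LinearMap.ker γ := by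
    ext x
    rw [LinearMap.mem_ker, LinearMap.mem_ker]
    constructor
    · intro hx
      refine LinearMap.ext fun y => ?_
      change (d2 y : P0 →ₗ[R] R) x = 0
      have hy : d2 y ∈ LinearMap.ker p := hr2 ▸ ⟨y, rfl⟩
      obtain ⟨z, rfl⟩ : x ∈ LinearMap.range d := by rw [hr]; exact hx
      exact (hpk _).1 hy z
    · intro hx
      refine ht _ fun f => ?_
      have hf : f ∘ₗ π ∈ LinearMap.ker p := by
        rw [hpk]
        intro z
        have : d z ∈ LinearMap.ker π := hr ▸ ⟨z, rfl⟩
        rw [LinearMap.comp_apply, LinearMap.mem_ker.1 this, map_zero]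
      rw [← hr2] at hf
      obtain ⟨y, hy⟩ := hf
      have := LinearMap.congr_fun hx y
      change (d2 y : P0 →ₗ[R] R) x = 0 at this
      rw [hy] at this
      exact this
  exact (π.quotKerEquivOfSurjective hπ).symm ≪≫ₗ Submodule.quotEquivOfEq _ _ hγk ≪≫ₗ
    γ.quotKerEquivRange ≪≫ₗ LinearEquiv.ofEq _ _ hγr

end Link

section CSide

variable {R}
variable {C : ModuleCat.{u} R}

lemma desc_of {P1 P0 M : ModuleCat.{u} R} {d : P1 →ₗ[R] P0} {π : P0 →ₗ[R] M}
    (hπ : Function.Surjective π) (hr : LinearMap.range d = LinearMap.ker π)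
    {N : Type u} [AddCommGroup N] [Module R N] (φ : P0 →ₗ[R] N) (hφ : ∀ x, φ (d x) = 0) :
    ∃ ψ : M →ₗ[R] N, ∀ x, ψ (π x) = φ x := by
  have s : SE (A := ModuleCat.of R (LinearMap.ker π)) (Submodule.subtype _) π :=
    ⟨Subtype.val_injective, hπ, by simp⟩
  refine s.desc (N := ModuleCat.of R N) φ ?_
  rintro ⟨a, ha⟩
  rw [← hr] at ha
  obtain ⟨x, rfl⟩ := ha
  exact hφ x

lemma TL_bid (hC : IsSemidualizing R C) (M : ModuleCat.{u} R) (h : TL M) :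
    Function.Injective (bidualityMap R C M) := by
  rw [bid_inj]
  intro m hm
  refine h m fun f => hC.faithful fun c => ?_
  have h1 : f m • c = 0 := hm (LinearMap.toSpanSingleton R C c ∘ₗ f)
  rw [h1, zero_smul]

/-- the comparison map `L ⊗ C → Hom(P, C)` -/
def tht (C : ModuleCat.{u} R) {L P : ModuleCat.{u} R} (ι : L →ₗ[R] P →ₗ[R] R) : L ⊗[R] C →ₗ[R] (P →ₗ[R] C) :=
  TensorProduct.lift (LinearMap.mk₂ R (fun l c => LinearMap.toSpanSingleton R C c ∘ₗ ι l)
    (by intro l l' c; ext x; simp [add_smul]) (by intro r l c; ext x; simp [mul_smul])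
    (by intro l c c'; ext x; simp) (by intro r l c; ext x; exact smul_comm _ _ _))

lemma tht_tmul (C : ModuleCat.{u} R) {L P : ModuleCat.{u} R} (ι : L →ₗ[R] P →ₗ[R] R) (l : L) (c : C) (x : P) :
    tht C ι (l ⊗ₜ c) x = ι l x • c := rfl

lemma tht_inj [IsNoetherianRing R] (hC : IsSemidualizing R C) {L P : ModuleCat.{u} R} (ι : L →ₗ[R] P →ₗ[R] R)
    (hι : Function.Injective ι) (hLf : Module.Finite R L)
    (hb : Function.Surjective (TensorProduct.mk R L C)) :
    Function.Injective (tht C ι) := by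
  have hCf := hC.1
  rw [← LinearMap.ker_eq_bot, ← Submodule.subsingleton_iff_eq_bot]
  apply hC.sub_of_hom
  refine subsingleton_of_forall_eq 0 fun g => ?_
  obtain ⟨l, hl⟩ := hb (Submodule.subtype _ ∘ₗ g)
  have hl' : ∀ c, l ⊗ₜ[R] c = (g c : L ⊗[R] C) := fun c => LinearMap.congr_fun hl c
  have h0 : l = 0 := by
    apply hι
    rw [map_zero]
    refine LinearMap.ext fun x => hC.faithful fun c => ?_
    have h1 : tht C ι (g c) = 0 := (g c).2
    rw [← hl'] at h1
    have h2 : ι l x • c = 0 := LinearMap.congr_fun h1 x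
    rw [h2]
    exact (zero_smul R c).symm
  refine LinearMap.ext fun c => Subtype.ext ?_
  rw [← hl', h0, TensorProduct.zero_tmul]
  rfl

lemma aux_ker (C : Type u) [AddCommGroup C] [Module R C] {D L N : Type u} [AddCommGroup L] [Module R L]
    [AddCommGroup D] [Module R D] [AddCommGroup N] [Module R N]
    (p : D →ₗ[R] L) (hp : Function.Surjective p) (Θ : D ⊗[R] C →ₗ[R] N) (z : D ⊗[R] C)
    (hz : LinearMap.rTensor C p z = 0) (hx : ∀ f, p f = 0 → ∀ c : C, Θ (f ⊗ₜ c) = 0) :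
    Θ z = 0 := by
  obtain ⟨w, rfl⟩ := (rTensor_exact C (LinearMap.exact_subtype_ker_map p) hp z).1 hz
  have : Θ ∘ₗ LinearMap.rTensor C (LinearMap.ker p).subtype = 0 :=
    TensorProduct.ext' fun f c => hx f f.2 c
  exact LinearMap.congr_fun this w

section

variable {P1 P0 M L D : ModuleCat.{u} R} {d : P1 →ₗ[R] P0} {π : P0 →ₗ[R] M}
  {ι : L →ₗ[R] P1 →ₗ[R] R} {δ : D →ₗ[R] P0 →ₗ[R] R} {p : D →ₗ[R] L}

lemma tht_comp (C : ModuleCat.{u} R) (hp : ∀ f x, ι (p f) x = δ f (d x)) :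
    tht C ι ∘ₗ LinearMap.rTensor C p = LinearMap.lcomp R C d ∘ₗ tht C δ := by
  refine TensorProduct.ext' fun f c => LinearMap.ext fun x => ?_
  change ι (p f) x • c = δ f (d x) • c
  rw [hp]

lemma tht_range (C : ModuleCat.{u} R) (hp : ∀ f x, ι (p f) x = δ f (d x)) (hs : Function.Surjective p)
    (hδ : Function.Surjective (tht C δ)) :
    LinearMap.range (tht C ι) = LinearMap.range (LinearMap.lcomp R C d) := by
  have h1 := LinearMap.range_eq_top.2 (LinearMap.rTensor_surjective C hs)
  rw [← LinearMap.range_comp_of_range_eq_top (tht C ι) h1, tht_comp C hp,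
    LinearMap.range_comp_of_range_eq_top _ (LinearMap.range_eq_top.2 hδ)]

lemma bid_TL (hp : ∀ f x, ι (p f) x = δ f (d x)) (hs : Function.Surjective p)
    (hδ : Function.Surjective (tht C δ)) (hι : Function.Injective (tht C ι))
    (hπ : Function.Surjective π) (hr : LinearMap.range d = LinearMap.ker π)
    (h : Function.Injective (bidualityMap R C M)) : TL M := by
  rw [bid_inj] at h
  intro m hm
  refine h m fun ψ => ?_
  obtain ⟨x, rfl⟩ := hπ m
  obtain ⟨z, hz⟩ := hδ (ψ ∘ₗ π)
  have hd : ∀ y, π (d y) = 0 := fun y => by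
    have : d y ∈ LinearMap.ker π := hr ▸ ⟨y, rfl⟩
    exact this
  have h0 : LinearMap.rTensor C p z = 0 := by
    apply hι
    rw [map_zero]
    have h1 := LinearMap.congr_fun (tht_comp C hp) z
    refine h1.trans ?_
    rw [LinearMap.comp_apply, hz]
    refine LinearMap.ext fun y => ?_
    change ψ (π (d y)) = 0
    rw [hd, map_zero]
  have h2 := aux_ker C p hs ((LinearMap.applyₗ x) ∘ₗ tht C δ) z h0 (fun f hf c => by
    change δ f x • c = 0
    obtain ⟨φ, hφ⟩ := desc_of hπ hr (δ f) (fun y => by rw [← hp, hf, map_zero]; rfl)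
    rw [← hφ, hm, zero_smul])
  have h3 := LinearMap.congr_fun hz x
  exact h3.symm.trans h2

end

lemma bid_proj_surj (hC : IsSemidualizing R C) (P : ModuleCat.{u} R) [Module.Finite R P] [Module.Projective R P] :
    Function.Surjective (bidualityMap R C P) := by
  intro Φ
  obtain ⟨F, hF⟩ := hC.hom_repr (S := P →ₗ[R] R)
    (TensorProduct.curry ((Φ : (P →ₗ[R] C) →ₗ[R] C) ∘ₗ dualTensorHom R P C))
  obtain ⟨x, hx⟩ := (Module.evalEquiv R P).surjective F
  refine ⟨x, ?_⟩
  have key : (bidualityMap R C P x) ∘ₗ dualTensorHom R P C = Φ ∘ₗ dualTensorHom R P C := by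
    refine TensorProduct.ext' fun f c => ?_
    refine Eq.trans ?_ (hF f c).symm
    rw [← hx]
    rfl
  refine LinearMap.ext fun ψ => ?_
  obtain ⟨z, rfl⟩ := (dualTensorHomEquiv R P C).surjective ψ
  exact LinearMap.congr_fun key z

lemma xv_dl_proj (hC : IsSemidualizing R C) (P : ModuleCat.{u} R) [Module.Finite R P] [Module.Projective R P] (i : ℕ) :
    XV (dl C P) C (i+1) := by
  have hp : Module.Projective R (Module.Dual R P) := inferInstance
  have h := xv_tensor_proj C (ModuleCat.of R (Module.Dual R P)) hp i C (hC.xv i)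
  exact (xv_congr (M := ModuleCat.of R (C ⊗[R] (Module.Dual R P))) (M' := dl C P) C
    (TensorProduct.comm R C (Module.Dual R P) ≪≫ₗ dualTensorHomEquiv R P C) (i+1)).1 h

theorem lam_main [IsNoetherianRing R] (hC : IsSemidualizing R C)
    {P1 P0 M : ModuleCat.{u} R} {d : P1 →ₗ[R] P0} {π : P0 →ₗ[R] M}
    (h : IsMinimalPresentation R d π) (hA : MemAuslanderClass R C (lam d)) :
    (Function.Injective (bidualityMap R C M) ↔ TL M) ∧
    (XV (lam d) (ModuleCat.of R R) 1 ↔ Function.Surjective (bidualityMap R C M)) ∧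
    ∀ i, (XV (lam d) (ModuleCat.of R R) (i+2) ↔ XV (dl C M) C (i+1)) := by
  have h0 := h.2.1
  have hP0 := h.2.2.1.1
  have hπ := h.2.2.1.2.1
  have hr := h.2.2.2.1
  let D : ModuleCat.{u} R := ModuleCat.of R (P0 →ₗ[R] R)
  let δ : D →ₗ[R] P0 →ₗ[R] R := LinearMap.id
  let ι : lam d →ₗ[R] P1 →ₗ[R] R := Submodule.subtype _
  let p : D →ₗ[R] lam d := (LinearMap.lcomp R R d).rangeRestrict
  have hps : Function.Surjective p := LinearMap.surjective_rangeRestrict _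
  have hDf : Module.Finite R D := inferInstanceAs (Module.Finite R (Module.Dual R P0))
  have hLf : Module.Finite R (lam d) := Module.Finite.of_surjective p hps
  have hp : ∀ f x, ι (p f) x = δ f (d x) := fun f x => rfl
  have hδ : Function.Surjective (tht C δ) := by
    intro ψ
    obtain ⟨z, hz⟩ := (dualTensorHomEquiv R P0 C).surjective ψ
    exact ⟨z, hz⟩
  have hθ := tht_inj hC ι Subtype.val_injective hLf hA.1.2
  have hd : ∀ y, π (d y) = 0 := fun y => by
    have : d y ∈ LinearMap.ker π := hr ▸ ⟨y, rfl⟩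
    exact this
  have s : SE (B := dl C P0) (D := imd C d) (dm C π) (dm C d).rangeRestrict := by
    refine ⟨?_, LinearMap.surjective_rangeRestrict _, ?_⟩
    · intro x y hxy
      refine LinearMap.ext fun m => ?_
      obtain ⟨b, rfl⟩ := hπ m
      exact LinearMap.congr_fun hxy b
    · rw [LinearMap.ker_rangeRestrict]
      ext φ
      constructor
      · intro hφ
        obtain ⟨ψ, hψ⟩ := desc_of hπ hr (φ : P0 →ₗ[R] C) (fun a => LinearMap.congr_fun hφ a)
        exact ⟨ψ, LinearMap.ext hψ⟩
      · rintro ⟨ψ, rfl⟩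
        refine LinearMap.ext fun x => ?_
        change ψ (π (d x)) = 0
        rw [hd, map_zero]
  have eq : ModuleCat.of R (C ⊗[R] (lam d)) ≃ₗ[R] imd C d :=
    TensorProduct.comm R C (lam d) ≪≫ₗ LinearEquiv.ofInjective _ hθ ≪≫ₗ
      LinearEquiv.ofEq _ _ (tht_range C hp hps hδ)
  have ht : ∀ i, XV (lam d) (ModuleCat.of R R) (i+1) ↔ XV (imd C d) C (i+1) := fun i =>
    (tor_main hC (lam d) hA.2.1 i).symm.trans (xv_congr C eq (i+1))
  refine ⟨⟨bid_TL hp hps hδ hθ hπ hr, TL_bid hC M⟩, ?_, fun i => ?_⟩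
  · rw [ht 0, s.one_iff C (xv_dl_proj hC P0 0)]
    exact bid_surj_iff C hπ (bid_proj_surj hC P0)
  · rw [ht (i+1)]
    exact (s.shift_iff C (i+1) (xv_dl_proj hC P0 i) (xv_dl_proj hC P0 (i+1))).symm

end CSide

section Final

variable {R}
variable {C : ModuleCat.{u} R}

lemma le_sInf_nat (S : Set ℕ) (k : ℕ) :
    (k : ℕ∞) ≤ sInf ((fun i : ℕ => (i : ℕ∞)) '' S) ↔ ∀ i, i < k → i ∉ S := by
  rw [le_sInf_iff]
  constructor
  · intro h i hi hS
    have : (k : ℕ∞) ≤ (i : ℕ∞) := h _ ⟨i, hS, rfl⟩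
    have : k ≤ i := by exact_mod_cast this
    omega
  · rintro h _ ⟨i, hS, rfl⟩
    by_contra hlt
    have : i < k := by
      have hlt' : (i : ℕ∞) < (k : ℕ∞) := not_le.1 hlt
      exact_mod_cast hlt'
    exact h i this hS

lemma le_gradeR (E : ModuleCat.{u} R) (k : ℕ) :
    (k : ℕ∞) ≤ gradeR R E ↔ ∀ i, i < k → XV E (ModuleCat.of R R) i := by
  rw [gradeR, le_sInf_nat]
  refine forall_congr' fun i => imp_congr_right fun _ => ?_
  rw [Set.mem_ofPred_eq, not_not]
  exact extM_iff _ _ _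

lemma le_rgrade (C M : ModuleCat.{u} R) (k : ℕ) :
    (k : ℕ∞) ≤ rgrade R C M ↔ ∀ i, i < k → 0 < i → XV M C i := by
  rw [rgrade, le_sInf_nat]
  refine forall_congr' fun i => imp_congr_right fun _ => ?_
  rw [Set.mem_ofPred_eq, not_and, not_not]
  exact imp_congr_right fun _ => extM_iff _ _ _

lemma lambda_unpack {M L : ModuleCat.{u} R} (h : IsLambda R M L) :
    ∃ (P1 P0 : ModuleCat.{u} R) (d : P1 →ₗ[R] P0) (π : P0 →ₗ[R] M), IsMinimalPresentation R d π ∧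
      ∀ i, (XV L (ModuleCat.of R R) (i+1) ↔ XV (lam d) (ModuleCat.of R R) (i+1)) := by
  obtain ⟨T, ⟨P1, P0, d, π, hm, ⟨eT⟩⟩, P, ρ, hPf, hP, ⟨eL⟩⟩ := h
  refine ⟨P1, P0, d, π, hm, fun i => ?_⟩
  have s1 : SE (A := ModuleCat.of R (LinearMap.ker ρ)) (Submodule.subtype _) ρ :=
    ⟨Subtype.val_injective, hP.2.1, by simp⟩
  have s2 := quot_se (B := ModuleCat.of R (P1 →ₗ[R] R)) (LinearMap.range (LinearMap.lcomp R R d))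
  have h1 := hm.1
  have h2 := hm.2.2.2.2.1
  have hD : Module.Projective R (ModuleCat.of R (P1 →ₗ[R] R)) :=
    inferInstanceAs (Module.Projective R (Module.Dual R P1))
  have t1 := s1.shift_iff (ModuleCat.of R R) (i+1) (xv_proj _ _ hP.1 _ (by simp)) (xv_proj _ _ hP.1 _ (by simp))
  have t2 := s2.shift_iff (ModuleCat.of R R) (i+1) (xv_proj _ _ hD _ (by simp)) (xv_proj _ _ hD _ (by simp))
  have t3 := xv_congr (M' := ModuleCat.of R (LinearMap.ker ρ)) (ModuleCat.of R R) eL (i+1)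
  have t4 := xv_congr (M' := ModuleCat.of R ((P1 →ₗ[R] R) ⧸ (LinearMap.range (LinearMap.lcomp R R d))))
    (ModuleCat.of R R) eT (i+1+1)
  exact t3.trans (t1.trans (t4.trans t2.symm))

lemma xv_of_sub {E : ModuleCat.{u} R} (hE : Subsingleton E) (N : ModuleCat.{u} R) (i : ℕ) : XV E N i := by
  refine subsingleton_of_forall_eq 0 fun x => ?_
  have hz : 𝟙 E = 0 := ModuleCat.hom_ext (LinearMap.ext fun φ => Subsingleton.elim _ _)
  have : x = (Abelian.Ext.mk₀ (𝟙 _)).comp x (zero_add _) := by simp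
  rw [this, hz]
  simp

theorem main_aux [IsNoetherianRing R] (hsp : IsSemiperfectRing R)
    (hC : IsSemidualizing R C)
    (M : ModuleCat.{u} R) (hMfin : Module.Finite R M)
    (m : ℕ) (hstable : IsStable R M)
    (hle : gcdimLE R C (m+1) M) (hv : ∀ i, i < m+1 → 0 < i → XV M C i)
    (hA : ∀ L : ModuleCat.{u} R, IsLambda R M L → MemAuslanderClass R C L)
    (hrg : rgrade R C M = ((m+1 : ℕ) : ℕ∞)) :
    (IsHorizontallyLinked R M ↔
      ∀ L : ModuleCat.{u} R, IsLambda R M L →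
        rgrade R C M + rgrade R (ModuleCat.of R R) L =
          gradeR R (ExtM R M C (m+1))) ∧
    (IsHorizontallyLinked R M ↔
      ((m+1+1 : ℕ) : ℕ∞) ≤ gradeR R (ExtM R M C (m+1))) := by
  have hCf := hC.1
  obtain ⟨e⟩ := extM_equiv M C (m+1)
  obtain ⟨hE0, hE1, hE2, hE3⟩ := dual_main m M hle (fun i h1 h2 => hv i h2 h1) _ e
  have hEf : Module.Finite R (ExtM R M C (m+1)) := by
    have : Module.Finite R (Abelian.Ext M C (m+1)) := inferInstance
    exact Module.Finite.equiv e.symm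
  have hcmp := grade_cmp hC _ hEf (hE0 0 (by simp))
  have hg : ∀ k : ℕ, (k : ℕ∞) ≤ gradeR R (ExtM R M C (m+1)) ↔ ∀ i, i < k → XV (ExtM R M C (m+1)) C i :=
    fun k => (le_gradeR _ k).trans (hcmp k).symm
  -- a presentation
  obtain ⟨P0, π, hP0f, hπ⟩ := hsp M hMfin
  obtain ⟨P1, d, hm⟩ := exists_pres hsp M hP0f π hπ
  have hbT := (lam_main hC hm (hA _ (isLambda_lam hm))).1
  have h3 : IsHorizontallyLinked R M ↔ ((m+1+1 : ℕ) : ℕ∞) ≤ gradeR R (ExtM R M C (m+1)) := by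
    have : IsHorizontallyLinked R M ↔ TL M := ⟨TL_of_linked M, linked_of_TL hsp hstable hm⟩
    rw [this, ← hbT, ← hE1, hg]
    constructor
    · intro h i hi
      rcases Nat.lt_or_ge i (m+1) with h' | h'
      · exact hE0 i h'
      · obtain rfl : i = m+1 := by omega
        exact h
    · intro h
      exact h _ (by omega)
  refine ⟨⟨fun hl L hL => ?_, fun h => ?_⟩, h3⟩
  · have hl' := (hg _).1 (h3.1 hl)
    obtain ⟨Q1, Q0, d', π', hm', hLL⟩ := lambda_unpack hL
    obtain ⟨-, hs1, hs2⟩ := lam_main hC hm' (hA _ (isLambda_lam hm'))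
    have hEL : ∀ i, XV (ExtM R M C (m+1)) C (m+1+(i+1)) ↔ XV L (ModuleCat.of R R) (i+1) := by
      intro i
      rw [hLL]
      cases i with
      | zero => exact hE2.trans hs1.symm
      | succ i =>
        have : m+1+(i+1+1) = m+3+i := by omega
        rw [this]
        exact (hE3 i).trans (hs2 i).symm
    rw [hrg]
    refine ENat.eq_of_forall_natCast_le_iff fun k => ?_
    rw [hg]
    rcases Nat.lt_or_ge (m+1) k with hk | hk
    · obtain ⟨j, rfl⟩ := Nat.exists_eq_add_of_lt hk
      rw [show m+1+j+1 = (m+1)+(j+1) by omega, Nat.cast_add (m+1) (j+1),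
        ENat.add_le_add_iff_left (ENat.natCast_ne_top _), le_rgrade]
      constructor
      · intro H i hi
        rcases Nat.lt_or_ge (m+1) i with h' | h'
        · obtain ⟨t, rfl⟩ := Nat.exists_eq_add_of_lt h'
          exact (hEL t).2 (H (t+1) (by omega) (by omega))
        · exact hl' i (by omega)
      · intro H i hi hi0
        obtain ⟨t, rfl⟩ := Nat.exists_eq_succ_of_ne_zero hi0.ne'
        exact (hEL t).1 (H _ (by omega))
    · refine iff_of_true ?_ fun i hi => hl' i (by omega)
      exact le_trans (by exact_mod_cast hk) le_self_add
  · rw [h3, ← h _ (isLambda_lam hm), hrg, Nat.cast_add (m+1) 1]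
    refine add_le_add le_rfl ?_
    rw [le_rgrade]
    intro i h1 h2
    omega

end Final

/-- for `M` stable reduced `G_C`-perfect of `G_C`-dimension `n` with
`λM ∈ A_C`, the following are equivalent: (i) `M` horizontally linked;
(ii) `r.grade(M,C) + r.grade(λM) = grade(Ext_R^n(M,C))`;
(iii) `grade(Ext_R^n(M,C)) ≥ n+1`; (iv) `grade(Ext_R^i(M,C)) ≥ i+1` for all `i > 0`. -/
theorem statement18 [IsNoetherianRing R] (hsp : IsSemiperfectRing R)
    (C : ModuleCat.{u} R) (hC : IsSemidualizing R C)
    (M : ModuleCat.{u} R) (hMfin : Module.Finite R ↥M)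
    (n : ℕ) (hstable : IsStable R M)
    (hred : IsReducedGCPerfect R C M) (hdim : gcdim R C M = n)
    (hA : ∀ L : ModuleCat.{u} R, IsLambda R M L → MemAuslanderClass R C L) :
    (IsHorizontallyLinked R M ↔
      ∀ L : ModuleCat.{u} R, IsLambda R M L →
        rgrade R C M + rgrade R (ModuleCat.of R R) L =
          gradeR R (ExtM R M C n)) ∧
    (IsHorizontallyLinked R M ↔
      (n : ℕ∞) + 1 ≤ gradeR R (ExtM R M C n)) ∧
    (IsHorizontallyLinked R M ↔
      ∀ i : ℕ, 0 < i → (i : ℕ∞) + 1 ≤ gradeR R (ExtM R M C i)) := by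
  have hrg : rgrade R C M = (n : ℕ∞) := hred.2.trans hdim
  have hv := (le_rgrade C M n).1 hrg.symm.le
  have hn : 1 ≤ n := by
    have : ((1 : ℕ) : ℕ∞) ≤ rgrade R C M := by
      rw [le_rgrade]
      intro i h1 h2
      omega
    rw [hrg] at this
    exact_mod_cast this
  have hle : gcdimLE R C n M := by
    have hne : ((fun k : ℕ => (k : ℕ∞)) '' {k | gcdimLE R C k M}).Nonempty := by
      by_contra hne
      rw [Set.not_nonempty_iff_eq_empty] at hne
      refine hred.1 ?_
      rw [gcdim, hne, sInf_empty]
    have hmem := csInf_mem hne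
    obtain ⟨k, hk, hkn⟩ := hmem
    have : (k : ℕ∞) = n := hkn.trans hdim
    have : k = n := by exact_mod_cast this
    exact this ▸ hk
  obtain ⟨m, rfl⟩ : ∃ m, n = m + 1 := ⟨n - 1, by omega⟩
  obtain ⟨h2, h3⟩ := main_aux hsp hC M hMfin m hstable hle hv hA hrg
  have h3' : IsHorizontallyLinked R M ↔ (((m+1 : ℕ)) : ℕ∞) + 1 ≤ gradeR R (ExtM R M C (m+1)) := by
    rw [h3, Nat.cast_add (m+1) 1]
    rfl
  refine ⟨h2, h3', h3'.trans ⟨fun h i hi => ?_, fun h => h _ (by omega)⟩⟩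
  rcases eq_or_ne i (m+1) with rfl | hne
  · exact h
  · have hx : XV M C i := by
      rcases Nat.lt_or_ge i (m+1) with h' | h'
      · exact hv i h' hi
      · exact gcdim_vanish (m+1) M hle i (by omega)
    have hs := (extM_iff _ _ _).2 hx
    have := (le_gradeR (ExtM R M C i) (i+1)).2 fun j _ => xv_of_sub hs _ j
    rw [Nat.cast_add i 1] at this
    exact this

end
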